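/- Let (R, m) be a commutative Noetherian local ring, M a finitely generated R-module of Krull dimension n, and I an ideal of R such that dim(M/IM) = d. If cd(I,M) = n − d, then there is an isomorphism of R-modules H^d_m(H^{n−d}_I(M)) ≅ H^n_m(M), and the dimension of the support of H^{n−d}_I(M) equals d. -/

import Mathlib

universe u

open CategoryTheory

/-- The cohomological dimension of `M` with respect to `I`:
`cd(I,M) = sup { i ∈ ℕ | H^i_I(M) ≠ 0 }`, as an element of `ℕ∞`. -/
noncomputable def cohomologicalDimension {R : Type u} [CommRing R] (I : Ideal R)
    (M : ModuleCat.{u} R) : ℕ∞ :=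
  sSup {c : ℕ∞ | ∃ i : ℕ, c = i ∧ Nontrivial ((localCohomology I i).obj M)}

/-!
Let `J = I + ann M`, and choose `d = dim R/J` elements `xs` whose images in `R/J` form a system of
parameters. Adjoining one element `x` to an ideal replaces the top local cohomology by
`(R_x/R) ⊗ -`. So if the local cohomology of `M` with support in `I` vanishes above degree `c`, the
one with support in `I + (xs)` has top module `T ⊗ H^c_I(M)` in degree `c + d`, where `T` depends
only on `xs`; since `M` is killed by its annihilator and `J + (xs)` has radical `m`, this is
`H^{c+d}_m(M)`. The same argument with the zero ideal in place of `I`, applied to the `J`-torsion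
module `H^c_I(M)`, identifies `H^d_m(H^c_I(M))` with the same tensor product.

The support of `H^c_I(M)` lies in `V(J)`, hence has dimension at most `d`. If it had smaller
dimension, `H^d_m(H^c_I(M)) ≅ H^n_m(M)` would vanish, contradicting Grothendieck's nonvanishing
theorem. The latter follows by induction on `n` from the Artinianness of `H^i_m(M)`: one may divide
out `Γ_m(M)`, and if `H^n_m(M)` then vanished, some `M`-regular `r ∈ m` would act surjectively on
`H^{n-1}_m(M)`, forcing `H^{n-1}_m(M/rM) = 0`.
-/

section LeftDerived

variable {C : Type*} [Category* C] [Abelian C]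
  {D : Type*} [Category* D] [Abelian D]
  {F G H : C ⥤ D} [F.Additive] [G.Additive] [H.Additive]

/-- The short complex `F(K) ⟶ G(K) ⟶ H(K)` of chain complexes attached to a complex of functors
`F ⟶ G ⟶ H`; its homology sequence computes the left derived functors when `K` is a
projective resolution. -/
noncomputable def evalShortComplex (α : F ⟶ G) (β : G ⟶ H) (w : α ≫ β = 0)
    (K : ChainComplex C ℕ) : ShortComplex (ChainComplex D ℕ) :=
  ShortComplex.mk ((NatTrans.mapHomologicalComplex α _).app K)
    ((NatTrans.mapHomologicalComplex β _).app K) (by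
      ext i
      exact NatTrans.congr_app w (K.X i))

/-- Functoriality of `evalShortComplex` in the chain complex. -/
noncomputable def evalShortComplexMap (α : F ⟶ G) (β : G ⟶ H) (w : α ≫ β = 0)
    {K L : ChainComplex C ℕ} (φ : K ⟶ L) :
    evalShortComplex α β w K ⟶ evalShortComplex α β w L where
  τ₁ := (F.mapHomologicalComplex _).map φ
  τ₂ := (G.mapHomologicalComplex _).map φ
  τ₃ := (H.mapHomologicalComplex _).map φ
  comm₁₂ := (NatTrans.mapHomologicalComplex α _).naturality φ
  comm₂₃ := (NatTrans.mapHomologicalComplex β _).naturality φ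

/-- The connecting morphism of the homology sequence of `evalShortComplex`. -/
noncomputable def evalDelta (α : F ⟶ G) (β : G ⟶ H) (w : α ≫ β = 0)
    {K : ChainComplex C ℕ} (hK : (evalShortComplex α β w K).ShortExact) (n : ℕ) :
    (HomologicalComplex.homologyFunctor D _ (n + 1)).obj
        ((H.mapHomologicalComplex (ComplexShape.down ℕ)).obj K) ⟶
      (HomologicalComplex.homologyFunctor D _ n).obj
        ((F.mapHomologicalComplex (ComplexShape.down ℕ)).obj K) :=
  hK.δ (n + 1) n (by simp)

lemma evalDelta_naturality (α : F ⟶ G) (β : G ⟶ H) (w : α ≫ β = 0)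
    {K L : ChainComplex C ℕ} (hK : (evalShortComplex α β w K).ShortExact)
    (hL : (evalShortComplex α β w L).ShortExact) (φ : K ⟶ L) (n : ℕ) :
    (H.mapHomologicalComplex _ ⋙ HomologicalComplex.homologyFunctor _ _ (n + 1)).map φ ≫
        evalDelta α β w hL n =
      evalDelta α β w hK n ≫
        (F.mapHomologicalComplex _ ⋙ HomologicalComplex.homologyFunctor _ _ n).map φ :=
  (HomologicalComplex.HomologySequence.δ_naturality (evalShortComplexMap α β w φ)
    hK hL (n + 1) n (by simp)).symm

lemma evalDelta_comp (α : F ⟶ G) (β : G ⟶ H) (w : α ≫ β = 0)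
    {K : ChainComplex C ℕ} (hK : (evalShortComplex α β w K).ShortExact) (n : ℕ) :
    evalDelta α β w hK n ≫ (HomologicalComplex.homologyFunctor D (ComplexShape.down ℕ) n).map
        ((NatTrans.mapHomologicalComplex α _).app K) = 0 :=
  hK.δ_comp (n + 1) n (by simp)

lemma comp_evalDelta (α : F ⟶ G) (β : G ⟶ H) (w : α ≫ β = 0)
    {K : ChainComplex C ℕ} (hK : (evalShortComplex α β w K).ShortExact) (n : ℕ) :
    (HomologicalComplex.homologyFunctor D (ComplexShape.down ℕ) (n + 1)).map
        ((NatTrans.mapHomologicalComplex β _).app K) ≫ evalDelta α β w hK n = 0 :=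
  hK.comp_δ (n + 1) n (by simp)

lemma eval_comp (α : F ⟶ G) (β : G ⟶ H) (w : α ≫ β = 0) (K : ChainComplex C ℕ) (n : ℕ) :
    (HomologicalComplex.homologyFunctor D (ComplexShape.down ℕ) n).map
        ((NatTrans.mapHomologicalComplex α _).app K) ≫
      (HomologicalComplex.homologyFunctor D (ComplexShape.down ℕ) n).map
        ((NatTrans.mapHomologicalComplex β _).app K) = 0 := by
  rw [← Functor.map_comp]
  exact (congrArg _ (evalShortComplex α β w K).zero).trans (Functor.map_zero _ _ _)

/-- The sequence of functors `F ⟶ G ⟶ H` is short exact on projective objects. This is what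
is needed for a long exact sequence of left derived functors, and holds for
`Hom(-, M₁) ⟶ Hom(-, M₂) ⟶ Hom(-, M₃)` (with arrows reversed) when `M₁ ⟶ M₂ ⟶ M₃` is short
exact. -/
def ShortExactOnProjectives (α : F ⟶ G) (β : G ⟶ H) (w : α ≫ β = 0) : Prop :=
  ∀ P : C, Projective P →
    (ShortComplex.mk (α.app P) (β.app P) (NatTrans.congr_app w P)).ShortExact

lemma ShortExactOnProjectives.evalShortComplex {α : F ⟶ G} {β : G ⟶ H} {w : α ≫ β = 0}
    (hw : ShortExactOnProjectives α β w) {X : C} (P : ProjectiveResolution X) :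
    (evalShortComplex α β w P.complex).ShortExact :=
  HomologicalComplex.shortExact_of_degreewise_shortExact _ fun i =>
    hw (P.complex.X i) (P.projective i)

variable [EnoughProjectives C]

/-- The connecting natural transformation of the long exact sequence of left derived functors. -/
noncomputable def leftDerivedDelta {α : F ⟶ G} {β : G ⟶ H} {w : α ≫ β = 0}
    (hw : ShortExactOnProjectives α β w) (n : ℕ) :
    H.leftDerived (n + 1) ⟶ F.leftDerived n where
  app X := ((projectiveResolution X).isoLeftDerivedObj H (n + 1)).hom ≫
    evalDelta α β w (hw.evalShortComplex (projectiveResolution X)) n ≫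
      ((projectiveResolution X).isoLeftDerivedObj F n).inv
  naturality X Y f := by
    let φ := ProjectiveResolution.lift f (projectiveResolution X) (projectiveResolution Y)
    have comm := ProjectiveResolution.lift_commutes_zero f (projectiveResolution X)
      (projectiveResolution Y)
    rw [ProjectiveResolution.isoLeftDerivedObj_hom_naturality_assoc f _ _ φ comm]
    simp only [Category.assoc]
    rw [ProjectiveResolution.isoLeftDerivedObj_inv_naturality f _ _ φ comm]
    congr 1
    simp only [← Category.assoc]
    exact congrArg (· ≫ _) (evalDelta_naturality α β w (hw.evalShortComplex _)
      (hw.evalShortComplex _) φ n)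

lemma leftDerived_comp_eq_zero (α : F ⟶ G) (β : G ⟶ H) (w : α ≫ β = 0) (n : ℕ) (X : C) :
    (NatTrans.leftDerived α n).app X ≫ (NatTrans.leftDerived β n).app X = 0 := by
  rw [ProjectiveResolution.leftDerived_app_eq _ (projectiveResolution X),
    ProjectiveResolution.leftDerived_app_eq _ (projectiveResolution X)]
  simp only [Category.assoc, Iso.inv_hom_id_assoc]
  rw [reassoc_of% eval_comp α β w]
  simp

lemma leftDerived_comp_delta {α : F ⟶ G} {β : G ⟶ H} {w : α ≫ β = 0}
    (hw : ShortExactOnProjectives α β w) (n : ℕ) (X : C) :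
    (NatTrans.leftDerived β (n + 1)).app X ≫ (leftDerivedDelta hw n).app X = 0 := by
  rw [ProjectiveResolution.leftDerived_app_eq _ (projectiveResolution X)]
  simp only [leftDerivedDelta, Category.assoc, Iso.inv_hom_id_assoc]
  rw [reassoc_of% comp_evalDelta α β w]
  simp

lemma leftDerived_delta_comp {α : F ⟶ G} {β : G ⟶ H} {w : α ≫ β = 0}
    (hw : ShortExactOnProjectives α β w) (n : ℕ) (X : C) :
    (leftDerivedDelta hw n).app X ≫ (NatTrans.leftDerived α n).app X = 0 := by
  rw [ProjectiveResolution.leftDerived_app_eq _ (projectiveResolution X)]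
  simp only [leftDerivedDelta, Category.assoc, Iso.inv_hom_id_assoc]
  rw [reassoc_of% evalDelta_comp α β w]
  simp

lemma leftDerived_exact_mid {α : F ⟶ G} {β : G ⟶ H} {w : α ≫ β = 0}
    (hw : ShortExactOnProjectives α β w) (n : ℕ) (X : C) :
    (ShortComplex.mk _ _ (leftDerived_comp_eq_zero α β w n X)).Exact := by
  let P := projectiveResolution X
  refine ShortComplex.exact_of_iso (S₁ := ShortComplex.mk _ _ (eval_comp α β w P.complex n)) ?_
    ((hw.evalShortComplex P).homology_exact₂ n)
  refine ShortComplex.isoMk (P.isoLeftDerivedObj F n).symm (P.isoLeftDerivedObj G n).symm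
    (P.isoLeftDerivedObj H n).symm ?_ ?_
  · simp [ProjectiveResolution.leftDerived_app_eq _ P]
  · simp [ProjectiveResolution.leftDerived_app_eq _ P]

lemma leftDerived_exact_right {α : F ⟶ G} {β : G ⟶ H} {w : α ≫ β = 0}
    (hw : ShortExactOnProjectives α β w) (n : ℕ) (X : C) :
    (ShortComplex.mk _ _ (leftDerived_comp_delta hw n X)).Exact := by
  let P := projectiveResolution X
  refine ShortComplex.exact_of_iso
    (S₁ := ShortComplex.mk _ _ (comp_evalDelta α β w (hw.evalShortComplex P) n)) ?_
    ((hw.evalShortComplex P).homology_exact₃ (n + 1) n (by simp))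
  refine ShortComplex.isoMk (P.isoLeftDerivedObj G (n + 1)).symm
    (P.isoLeftDerivedObj H (n + 1)).symm (P.isoLeftDerivedObj F n).symm ?_ ?_
  · simp [ProjectiveResolution.leftDerived_app_eq _ P]
  · simp [leftDerivedDelta, P]

lemma leftDerived_exact_left {α : F ⟶ G} {β : G ⟶ H} {w : α ≫ β = 0}
    (hw : ShortExactOnProjectives α β w) (n : ℕ) (X : C) :
    (ShortComplex.mk _ _ (leftDerived_delta_comp hw n X)).Exact := by
  let P := projectiveResolution X
  refine ShortComplex.exact_of_iso
    (S₁ := ShortComplex.mk _ _ (evalDelta_comp α β w (hw.evalShortComplex P) n)) ?_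
    ((hw.evalShortComplex P).homology_exact₁ (n + 1) n (by simp))
  refine ShortComplex.isoMk (P.isoLeftDerivedObj H (n + 1)).symm
    (P.isoLeftDerivedObj F n).symm (P.isoLeftDerivedObj G n).symm ?_ ?_
  · simp [leftDerivedDelta, P]
  · simp [ProjectiveResolution.leftDerived_app_eq _ P]

lemma isZero_leftDerived_succ_of_preservesHomology (F : C ⥤ D) [F.Additive]
    [F.PreservesHomology] (n : ℕ) (X : C) :
    Limits.IsZero ((F.leftDerived (n + 1)).obj X) := by
  let P := projectiveResolution X
  refine Limits.IsZero.of_iso ?_ (P.isoLeftDerivedObj F (n + 1))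
  have := ((HomologicalComplex.exactAt_iff _ _).1 (P.complex_exactAt_succ n)).map F
  exact (HomologicalComplex.exactAt_iff_isZero_homology _ _).1
    ((HomologicalComplex.exactAt_iff _ _).2 this)

end LeftDerived

section FilteredColimits

open Limits

lemma preservesColimitsOfShape_forget_moduleCat {R : Type u} [CommRing R] {J : Type}
    [SmallCategory J] [IsFiltered J] : PreservesColimitsOfShape J (forget (ModuleCat.{u} R)) := by
  have : PreservesFilteredColimitsOfSize.{0, 0} (forget (ModuleCat.{u} R)) :=
    preservesFilteredColimitsOfSize_shrink.{0, u, 0, u} _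
  infer_instance

lemma exact_of_isColimit {R : Type u} [CommRing R] {J : Type} [SmallCategory J]
    [IsFiltered J] {F G H : J ⥤ ModuleCat.{u} R} (α : F ⟶ G) (β : G ⟶ H)
    {cF : Cocone F} {cG : Cocone G} {cH : Cocone H} (hF : IsColimit cF) (hG : IsColimit cG)
    (hH : IsColimit cH) (a : cF.pt ⟶ cG.pt) (b : cG.pt ⟶ cH.pt)
    (ha : ∀ j, cF.ι.app j ≫ a = α.app j ≫ cG.ι.app j)
    (hb : ∀ j, cG.ι.app j ≫ b = β.app j ≫ cH.ι.app j)
    (hex : ∀ j, Function.Exact (α.app j) (β.app j)) : Function.Exact a b := by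
  have : PreservesColimitsOfShape J (forget (ModuleCat.{u} R)) :=
    preservesColimitsOfShape_forget_moduleCat
  have ha' : ∀ j (x : F.obj j), a (cF.ι.app j x) = cG.ι.app j (α.app j x) := fun j x =>
    ConcreteCategory.congr_hom (ha j) x
  have hb' : ∀ j (x : G.obj j), b (cG.ι.app j x) = cH.ι.app j (β.app j x) := fun j x =>
    ConcreteCategory.congr_hom (hb j) x
  have hG' : ∀ {j k} (f : j ⟶ k) (x : G.obj j), cG.ι.app k (G.map f x) = cG.ι.app j x :=
    fun f x => ConcreteCategory.congr_hom (cG.w f) x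
  intro y
  constructor
  · intro hy
    obtain ⟨j, x, rfl⟩ := Concrete.isColimit_exists_rep G hG y
    rw [hb'] at hy
    obtain ⟨k, f, g, hfg⟩ := Concrete.isColimit_exists_of_rep_eq H hH
      (β.app j x) (0 : H.obj j) (by rw [hy, map_zero])
    rw [map_zero] at hfg
    have hβ : β.app k (G.map f x) = 0 := by
      rw [← hfg]
      exact ConcreteCategory.congr_hom (β.naturality f) x
    obtain ⟨z, hz⟩ := (hex k _).1 hβ
    exact ⟨cF.ι.app k z, by rw [ha', hz, hG']⟩
  · rintro ⟨x, rfl⟩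
    obtain ⟨j, z, rfl⟩ := Concrete.isColimit_exists_rep F hF x
    rw [ha', hb', (hex j).apply_apply_eq_zero, map_zero]

end FilteredColimits

section ExtSequences

lemma homologyMap_eq_app_of_forall_f_eq_app {D : Type*} [Category* D] [Abelian D] (τ : 𝟭 D ⟶ 𝟭 D)
    {ι : Type*} {c : ComplexShape ι} {K : HomologicalComplex D c} (φ : K ⟶ K)
    (h : ∀ i, φ.f i = τ.app (K.X i)) (n : ι) :
    HomologicalComplex.homologyMap φ n = τ.app (K.homology n) := by
  have hcycles : HomologicalComplex.cyclesMap φ n = τ.app (K.cycles n) := by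
    rw [← cancel_mono (K.iCycles n), HomologicalComplex.cyclesMap_i, h]
    exact τ.naturality (K.iCycles n)
  rw [← cancel_epi (K.homologyπ n), HomologicalComplex.homologyπ_naturality, hcycles]
  exact (τ.naturality (K.homologyπ n)).symm

lemma conj_iso_eq_app {D : Type*} [Category* D] (τ : 𝟭 D ⟶ 𝟭 D) {A B : D} (e : A ≅ B)
    {f : B ⟶ B} (hf : f = τ.app B) : e.hom ≫ f ≫ e.inv = τ.app A := by
  rw [← Category.assoc, Iso.comp_inv_eq, hf]
  exact τ.naturality e.hom

variable {R : Type u} [CommRing R]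

lemma linearYoneda_shortExact {S : ShortComplex (ModuleCat.{u} R)} (hS : S.ShortExact)
    (P : ModuleCat.{u} R) (hP : Projective P) :
    (ShortComplex.mk (((linearYoneda R (ModuleCat.{u} R)).map S.f).app (Opposite.op P))
      (((linearYoneda R (ModuleCat.{u} R)).map S.g).app (Opposite.op P)) (by
        ext (x : P ⟶ S.X₁)
        change ((x ≫ S.f) ≫ S.g : P ⟶ S.X₃) = 0
        simp)).ShortExact := by
  have := hS.mono_f
  have := hS.epi_g
  refine ShortComplex.ShortExact.mk' ?_ ?_ ?_
  · rw [ShortComplex.moduleCat_exact_iff]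
    intro (x : P ⟶ S.X₂) (hx : x ≫ S.g = 0)
    exact ⟨hS.exact.lift x hx, hS.exact.lift_f x hx⟩
  · rw [ModuleCat.mono_iff_injective]
    intro (x : P ⟶ S.X₁) (y : P ⟶ S.X₁) (h : x ≫ S.f = y ≫ S.f)
    exact (cancel_mono S.f).1 h
  · rw [ModuleCat.epi_iff_surjective]
    intro (x : P ⟶ S.X₃)
    exact ⟨Projective.factorThru x S.g, Projective.factorThru_comp x S.g⟩

lemma linearYoneda_rightOp_comp_eq_zero (S : ShortComplex (ModuleCat.{u} R)) :
    NatTrans.rightOp ((linearYoneda R (ModuleCat.{u} R)).map S.g) ≫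
      NatTrans.rightOp ((linearYoneda R (ModuleCat.{u} R)).map S.f) = 0 := by
  ext P
  apply Quiver.Hom.unop_inj
  ext (x : P ⟶ S.X₁)
  change ((x ≫ S.f) ≫ S.g : P ⟶ S.X₃) = 0
  simp

lemma linearYoneda_shortExactOnProjectives {S : ShortComplex (ModuleCat.{u} R)}
    (hS : S.ShortExact) : ShortExactOnProjectives
      (NatTrans.rightOp ((linearYoneda R (ModuleCat.{u} R)).map S.g))
      (NatTrans.rightOp ((linearYoneda R (ModuleCat.{u} R)).map S.f))
      (linearYoneda_rightOp_comp_eq_zero S) :=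
  fun P hP => (linearYoneda_shortExact hS P hP).op

/-- The connecting homomorphism for `Ext` in the second variable. -/
noncomputable def extDelta {S : ShortComplex (ModuleCat.{u} R)} (hS : S.ShortExact) (i : ℕ) :
    (Ext R (ModuleCat.{u} R) i).flip.obj S.X₃ ⟶ (Ext R (ModuleCat.{u} R) (i + 1)).flip.obj S.X₁ :=
  NatTrans.leftOp (leftDerivedDelta (linearYoneda_shortExactOnProjectives hS) i)

lemma ext_exact_mid {S : ShortComplex (ModuleCat.{u} R)} (hS : S.ShortExact) (i : ℕ)
    (A : (ModuleCat.{u} R)ᵒᵖ) :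
    Function.Exact (((Ext R (ModuleCat.{u} R) i).flip.map S.f).app A)
      (((Ext R (ModuleCat.{u} R) i).flip.map S.g).app A) :=
  (ShortComplex.ShortExact.moduleCat_exact_iff_function_exact _).1
    (leftDerived_exact_mid (linearYoneda_shortExactOnProjectives hS) i A.unop).unop

lemma ext_exact_right {S : ShortComplex (ModuleCat.{u} R)} (hS : S.ShortExact) (i : ℕ)
    (A : (ModuleCat.{u} R)ᵒᵖ) :
    Function.Exact (((Ext R (ModuleCat.{u} R) i).flip.map S.g).app A)
      ((extDelta hS i).app A) :=
  (ShortComplex.ShortExact.moduleCat_exact_iff_function_exact _).1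
    (leftDerived_exact_left (linearYoneda_shortExactOnProjectives hS) i A.unop).unop

lemma ext_exact_left {S : ShortComplex (ModuleCat.{u} R)} (hS : S.ShortExact) (i : ℕ)
    (A : (ModuleCat.{u} R)ᵒᵖ) :
    Function.Exact ((extDelta hS i).app A)
      (((Ext R (ModuleCat.{u} R) (i + 1)).flip.map S.f).app A) :=
  (ShortComplex.ShortExact.moduleCat_exact_iff_function_exact _).1
    (leftDerived_exact_right (linearYoneda_shortExactOnProjectives hS) i A.unop).unop

lemma isZero_ext_succ_of_injective (A : (ModuleCat.{u} R)ᵒᵖ) (E : ModuleCat.{u} R)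
    [hE : Injective E] (i : ℕ) :
    Limits.IsZero (((Ext R (ModuleCat.{u} R) (i + 1)).obj A).obj E) := by
  let Y := (linearYoneda R (ModuleCat.{u} R)).obj E
  have : Y.rightOp.PreservesHomology := by
    refine Functor.preservesHomology_of_map_exact _ fun S hS => ?_
    rw [← ShortComplex.exact_unop_iff]
    refine (ShortComplex.moduleCat_exact_iff _).2 ?_
    intro (x : S.X₂ ⟶ E) (hx : S.f ≫ x = 0)
    exact ⟨hS.descToInjective x hx, hS.comp_descToInjective x hx⟩
  exact (isZero_leftDerived_succ_of_preservesHomology Y.rightOp i A.unop).unop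

/-- Multiplication by `r` as an endomorphism of the identity functor of `(ModuleCat R)ᵒᵖ`. -/
def smulOpNatTrans (r : R) : 𝟭 (ModuleCat.{u} R)ᵒᵖ ⟶ 𝟭 (ModuleCat.{u} R)ᵒᵖ where
  app X := (r • 𝟙 X.unop).op
  naturality X Y f := by
    apply Quiver.Hom.unop_inj
    simp

lemma ext_map_smul (r : R) (i : ℕ) (A : (ModuleCat.{u} R)ᵒᵖ) (M : ModuleCat.{u} R) :
    ((Ext R (ModuleCat.{u} R) i).flip.map (r • 𝟙 M)).app A = r • 𝟙 _ := by
  let α := NatTrans.rightOp ((linearYoneda R (ModuleCat.{u} R)).map (r • 𝟙 M))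
  have happ : (NatTrans.leftDerived α i).app A.unop = (smulOpNatTrans r).app _ := by
    let P := projectiveResolution A.unop
    rw [ProjectiveResolution.leftDerived_app_eq α P i]
    have := homologyMap_eq_app_of_forall_f_eq_app (smulOpNatTrans r)
      ((NatTrans.mapHomologicalComplex α (ComplexShape.down ℕ)).app P.complex) (fun j => by
        apply Quiver.Hom.unop_inj
        ext (x : P.complex.X j ⟶ M)
        change x ≫ (r • 𝟙 M) = r • x
        simp) i
    exact conj_iso_eq_app (smulOpNatTrans r) (P.isoLeftDerivedObj _ i) this
  exact congrArg Quiver.Hom.unop happ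

end ExtSequences

section LocalCohomologySequence

open Limits localCohomology

variable {R : Type u} [CommRing R] (I : Ideal R)

/-- The direct system `t ↦ Ext^i(R/I^t, M)` computing local cohomology. -/
noncomputable def localCohomologySystem (i : ℕ) (M : ModuleCat.{u} R) :
    (ℕᵒᵖ)ᵒᵖ ⥤ ModuleCat.{u} R :=
  diagram (idealPowersDiagram I) i ⋙ (evaluation _ _).obj M

/-- The cocone exhibiting local cohomology as a colimit. -/
noncomputable def localCohomologyCocone (i : ℕ) (M : ModuleCat.{u} R) :
    Cocone (localCohomologySystem I i M) :=
  ((evaluation _ _).obj M).mapCocone (colimit.cocone (diagram (idealPowersDiagram I) i))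

/-- The cocone `localCohomologyCocone` is a colimit cocone. -/
noncomputable def localCohomologyIsColimit (i : ℕ) (M : ModuleCat.{u} R) :
    IsColimit (localCohomologyCocone I i M) :=
  isColimitOfPreserves _ (colimit.isColimit _)

/-- Functoriality of `localCohomologySystem`. -/
noncomputable def localCohomologySystemMap (i : ℕ) {M N : ModuleCat.{u} R} (f : M ⟶ N) :
    localCohomologySystem I i M ⟶ localCohomologySystem I i N :=
  Functor.whiskerLeft _ ((evaluation _ _).map f)

lemma localCohomologyCocone_map (i : ℕ) {M N : ModuleCat.{u} R} (f : M ⟶ N) (j : (ℕᵒᵖ)ᵒᵖ) :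
    (localCohomologyCocone I i M).ι.app j ≫ (localCohomology I i).map f =
      (localCohomologySystemMap I i f).app j ≫ (localCohomologyCocone I i N).ι.app j :=
  (((colimit.cocone (diagram (idealPowersDiagram I) i)).ι.app j).naturality f).symm

/-- The connecting homomorphisms of the `Ext` groups, as a map of direct systems. -/
noncomputable def localCohomologySystemDelta {S : ShortComplex (ModuleCat.{u} R)}
    (hS : S.ShortExact) (i : ℕ) :
    localCohomologySystem I i S.X₃ ⟶ localCohomologySystem I (i + 1) S.X₁ where
  app j := (extDelta hS i).app ((ringModIdeals (idealPowersDiagram I)).op.obj j)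
  naturality _ _ f := (extDelta hS i).naturality ((ringModIdeals (idealPowersDiagram I)).op.map f)

/-- The connecting homomorphism of local cohomology. -/
noncomputable def localCohomologyDelta {S : ShortComplex (ModuleCat.{u} R)}
    (hS : S.ShortExact) (i : ℕ) :
    (localCohomology I i).obj S.X₃ ⟶ (localCohomology I (i + 1)).obj S.X₁ :=
  (localCohomologyIsColimit I i S.X₃).map (localCohomologyCocone I (i + 1) S.X₁)
    (localCohomologySystemDelta I hS i)

lemma localCohomologyCocone_delta {S : ShortComplex (ModuleCat.{u} R)}
    (hS : S.ShortExact) (i : ℕ) (j : (ℕᵒᵖ)ᵒᵖ) :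
    (localCohomologyCocone I i S.X₃).ι.app j ≫ localCohomologyDelta I hS i =
      (localCohomologySystemDelta I hS i).app j ≫ (localCohomologyCocone I (i + 1) S.X₁).ι.app j :=
  (localCohomologyIsColimit I i S.X₃).ι_map _ _ _

lemma localCohomology_exact_mid {S : ShortComplex (ModuleCat.{u} R)} (hS : S.ShortExact) (i : ℕ) :
    Function.Exact ((localCohomology I i).map S.f) ((localCohomology I i).map S.g) :=
  exact_of_isColimit (localCohomologySystemMap I i S.f) (localCohomologySystemMap I i S.g)
    (localCohomologyIsColimit I i _) (localCohomologyIsColimit I i _)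
    (localCohomologyIsColimit I i _) _ _ (localCohomologyCocone_map I i S.f)
    (localCohomologyCocone_map I i S.g) fun _ => ext_exact_mid hS i _

lemma localCohomology_exact_right {S : ShortComplex (ModuleCat.{u} R)} (hS : S.ShortExact)
    (i : ℕ) : Function.Exact ((localCohomology I i).map S.g) (localCohomologyDelta I hS i) :=
  exact_of_isColimit (localCohomologySystemMap I i S.g) (localCohomologySystemDelta I hS i)
    (localCohomologyIsColimit I i _) (localCohomologyIsColimit I i _)
    (localCohomologyIsColimit I _ _) _ _ (localCohomologyCocone_map I i S.g)
    (localCohomologyCocone_delta I hS i) fun _ => ext_exact_right hS i _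

lemma localCohomology_exact_left {S : ShortComplex (ModuleCat.{u} R)} (hS : S.ShortExact)
    (i : ℕ) : Function.Exact (localCohomologyDelta I hS i) ((localCohomology I (i + 1)).map S.f) :=
  exact_of_isColimit (localCohomologySystemDelta I hS i)
    (localCohomologySystemMap I (i + 1) S.f)
    (localCohomologyIsColimit I i _) (localCohomologyIsColimit I _ _)
    (localCohomologyIsColimit I _ _) _ _ (localCohomologyCocone_delta I hS i)
    (localCohomologyCocone_map I (i + 1) S.f) fun _ => ext_exact_left hS i _

lemma localCohomologyCocone_jointly_surjective (i : ℕ) (M : ModuleCat.{u} R)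
    (x : (localCohomology I i).obj M) :
    ∃ (j : (ℕᵒᵖ)ᵒᵖ) (y : (localCohomologySystem I i M).obj j),
      (localCohomologyCocone I i M).ι.app j y = x := by
  have : PreservesColimitsOfShape (ℕᵒᵖ)ᵒᵖ (forget (ModuleCat.{u} R)) :=
    preservesColimitsOfShape_forget_moduleCat
  exact Concrete.isColimit_exists_rep _ (localCohomologyIsColimit I i M) x

lemma localCohomology_map_smul_id (i : ℕ) (M : ModuleCat.{u} R) (r : R)
    (z : (localCohomology I i).obj M) : (localCohomology I i).map (r • 𝟙 M) z = r • z := by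
  obtain ⟨j, y, rfl⟩ := localCohomologyCocone_jointly_surjective I i M z
  have hmap := ConcreteCategory.congr_hom (localCohomologyCocone_map I i (r • 𝟙 M) j) y
  have hext := ConcreteCategory.congr_hom
    (ext_map_smul r i ((ringModIdeals (idealPowersDiagram I)).op.obj j) M) y
  refine hmap.trans ((congrArg ((localCohomologyCocone I i M).ι.app j) hext).trans ?_)
  exact map_smul ((localCohomologyCocone I i M).ι.app j).hom r y

lemma subsingleton_localCohomology_succ_of_injective (i : ℕ) (E : ModuleCat.{u} R) [Injective E] :
    Subsingleton ((localCohomology I (i + 1)).obj E) := by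
  refine subsingleton_of_forall_eq 0 fun x => ?_
  obtain ⟨j, y, rfl⟩ := localCohomologyCocone_jointly_surjective I (i + 1) E x
  have := ModuleCat.subsingleton_of_isZero (isZero_ext_succ_of_injective
    ((ringModIdeals (idealPowersDiagram I)).op.obj j) E i)
  have hy : y = 0 := Subsingleton.elim (α := (((Ext R (ModuleCat.{u} R) (i + 1)).obj
    ((ringModIdeals (idealPowersDiagram I)).op.obj j)).obj E)) y 0
  rw [hy, map_zero]
  rfl

end LocalCohomologySequence

section ZerothDerived

variable {C : Type*} [Category* C] [Abelian C] [HasProjectiveResolutions C]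
  {D : Type*} [Category* D] [Abelian D]
  {F G : C ⥤ D} [F.Additive] [G.Additive]

lemma leftDerived_zero_comp_fromLeftDerivedZero (α : F ⟶ G) (X : C) :
    (NatTrans.leftDerived α 0).app X ≫ G.fromLeftDerivedZero.app X =
      F.fromLeftDerivedZero.app X ≫ α.app X := by
  let P := projectiveResolution X
  rw [P.fromLeftDerivedZero_eq F, P.fromLeftDerivedZero_eq G, P.leftDerived_app_eq α 0]
  simp only [Category.assoc, Iso.inv_hom_id_assoc]
  congr 1
  have hhomology := HomologicalComplex.homologyι_naturality
    ((NatTrans.mapHomologicalComplex α (ComplexShape.down ℕ)).app P.complex) 0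
  have hopcycles : HomologicalComplex.opcyclesMap
      ((NatTrans.mapHomologicalComplex α (ComplexShape.down ℕ)).app P.complex) 0 ≫
      P.fromLeftDerivedZero' G = P.fromLeftDerivedZero' F ≫ α.app X := by
    rw [← cancel_epi (HomologicalComplex.pOpcycles _ _),
      HomologicalComplex.p_opcyclesMap_assoc,
      ProjectiveResolution.pOpcycles_comp_fromLeftDerivedZero',
      ProjectiveResolution.pOpcycles_comp_fromLeftDerivedZero'_assoc]
    exact (α.naturality (P.π.f 0)).symm
  exact (reassoc_of% hhomology) _ |>.trans
    ((congrArg _ hopcycles).trans (Category.assoc _ _ _).symm)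

end ZerothDerived

section ZerothLocalCohomology

open Limits localCohomology

variable {R : Type u} [CommRing R]

instance preservesFiniteColimits_linearYoneda_rightOp (M : ModuleCat.{u} R) :
    PreservesFiniteColimits ((linearYoneda R (ModuleCat.{u} R)).obj M).rightOp := by
  have : PreservesFiniteLimits ((linearYoneda R (ModuleCat.{u} R)).obj M) := by
    have h : PreservesLimitsOfSize.{0, 0} ((linearYoneda R (ModuleCat.{u} R)).obj M ⋙
        forget (ModuleCat.{u} R)) :=
      inferInstanceAs (PreservesLimitsOfSize.{0, 0} (yoneda.obj M))
    have : PreservesLimitsOfSize.{0, 0} ((linearYoneda R (ModuleCat.{u} R)).obj M) :=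
      preservesLimits_of_reflects_of_preserves _ (forget (ModuleCat.{u} R))
    exact PreservesLimitsOfSize.preservesFiniteLimits _
  exact preservesFiniteColimits_rightOp _

/-- The isomorphism between `Hom` and `Ext^0`. -/
noncomputable def homIsoExtZero (M : ModuleCat.{u} R) :
    (linearYoneda R (ModuleCat.{u} R)).obj M ≅ (Ext R (ModuleCat.{u} R) 0).flip.obj M where
  hom := NatTrans.leftOp ((linearYoneda R (ModuleCat.{u} R)).obj M).rightOp.fromLeftDerivedZero
  inv := NatTrans.leftOp
    ((linearYoneda R (ModuleCat.{u} R)).obj M).rightOp.leftDerivedZeroIsoSelf.inv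
  hom_inv_id := by
    ext1
    ext1 A
    exact congrArg Quiver.Hom.unop (Functor.leftDerivedZeroIsoSelf_inv_hom_id_app
      ((linearYoneda R (ModuleCat.{u} R)).obj M).rightOp A.unop)
  inv_hom_id := by
    ext1
    ext1 A
    exact congrArg Quiver.Hom.unop (Functor.leftDerivedZeroIsoSelf_hom_inv_id_app
      ((linearYoneda R (ModuleCat.{u} R)).obj M).rightOp A.unop)

lemma homIsoExtZero_naturality {M N : ModuleCat.{u} R} (f : M ⟶ N) :
    (homIsoExtZero M).hom ≫ (Ext R (ModuleCat.{u} R) 0).flip.map f =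
      (linearYoneda R (ModuleCat.{u} R)).map f ≫ (homIsoExtZero N).hom := by
  ext1
  ext1 A
  exact congrArg Quiver.Hom.unop (leftDerived_zero_comp_fromLeftDerivedZero
    (NatTrans.rightOp ((linearYoneda R (ModuleCat.{u} R)).map f)) A.unop)

variable (I : Ideal R)

/-- Evaluation at `1` of homomorphisms `R/I^t ⟶ M`. -/
noncomputable def evalOneCocone (M : ModuleCat.{u} R) :
    Cocone ((ringModIdeals (idealPowersDiagram I)).op ⋙
      (linearYoneda R (ModuleCat.{u} R)).obj M) where
  pt := M
  ι :=
    { app j := ModuleCat.ofHom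
        { toFun (f : (ringModIdeals (idealPowersDiagram I)).obj j.unop ⟶ M) :=
            f.hom (Ideal.Quotient.mk _ 1 : R ⧸ (idealPowersDiagram I).obj j.unop)
          map_add' _ _ := rfl
          map_smul' _ _ := rfl }
      naturality _ _ _ := by
        ext f
        rfl }

/-- The systems of modules `Hom(R/I^t, M)` and `Ext^0(R/I^t, M)` are isomorphic. -/
noncomputable def homSystemIso (M : ModuleCat.{u} R) :
    (ringModIdeals (idealPowersDiagram I)).op ⋙ (linearYoneda R (ModuleCat.{u} R)).obj M ≅
      localCohomologySystem I 0 M :=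
  Functor.isoWhiskerLeft (ringModIdeals (idealPowersDiagram I)).op (homIsoExtZero M)

/-- The inclusion of the zeroth local cohomology module. -/
noncomputable def localCohomologyZeroι (M : ModuleCat.{u} R) :
    (localCohomology I 0).obj M ⟶ M :=
  (localCohomologyIsColimit I 0 M).desc
    ((Cocone.precompose (homSystemIso I M).inv).obj (evalOneCocone I M))

lemma homSystemIso_ι_localCohomologyZeroι (M : ModuleCat.{u} R) (j : (ℕᵒᵖ)ᵒᵖ) :
    (homSystemIso I M).hom.app j ≫ (localCohomologyCocone I 0 M).ι.app j ≫
      localCohomologyZeroι I M = (evalOneCocone I M).ι.app j := by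
  refine (congrArg (fun t => (homSystemIso I M).hom.app j ≫ t)
    ((localCohomologyIsColimit I 0 M).fac _ j)).trans ?_
  exact (homSystemIso I M).hom_inv_id_app_assoc j _

lemma exists_homSystem_eq (M : ModuleCat.{u} R) (x : (localCohomology I 0).obj M) :
    ∃ (j : (ℕᵒᵖ)ᵒᵖ) (f : (ringModIdeals (idealPowersDiagram I)).obj j.unop ⟶ M),
      (localCohomologyCocone I 0 M).ι.app j ((homSystemIso I M).hom.app j f) = x := by
  obtain ⟨j, y, rfl⟩ := localCohomologyCocone_jointly_surjective I 0 M x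
  exact ⟨j, (homSystemIso I M).inv.app j y, congrArg _
    (ConcreteCategory.congr_hom ((homSystemIso I M).inv_hom_id_app j) y)⟩

lemma localCohomologyZeroι_apply (M : ModuleCat.{u} R) (j : (ℕᵒᵖ)ᵒᵖ)
    (f : (ringModIdeals (idealPowersDiagram I)).obj j.unop ⟶ M) :
    localCohomologyZeroι I M
      ((localCohomologyCocone I 0 M).ι.app j ((homSystemIso I M).hom.app j f)) =
      f.hom (Ideal.Quotient.mk _ 1 : R ⧸ (idealPowersDiagram I).obj j.unop) :=
  ConcreteCategory.congr_hom (homSystemIso_ι_localCohomologyZeroι I M j) f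

lemma localCohomologyZeroι_injective (M : ModuleCat.{u} R) :
    Function.Injective (localCohomologyZeroι I M) := by
  rw [injective_iff_map_eq_zero]
  intro x hx
  obtain ⟨j, f, rfl⟩ := exists_homSystem_eq I M x
  rw [localCohomologyZeroι_apply] at hx
  have : f = 0 := by
    ext y
    obtain ⟨r, rfl⟩ := Ideal.Quotient.mk_surjective
      (y : R ⧸ (idealPowersDiagram I).obj j.unop)
    have h : (Ideal.Quotient.mk ((idealPowersDiagram I).obj j.unop) r) =
      r • Ideal.Quotient.mk ((idealPowersDiagram I).obj j.unop) 1 := by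
      rw [← Ideal.Quotient.mk_eq_mk, ← Ideal.Quotient.mk_eq_mk, ← Submodule.Quotient.mk_smul,
        smul_eq_mul, mul_one]
    rw [h]
    refine (f.hom.map_smul r _).trans ?_
    rw [hx, smul_zero]
    rfl
  rw [this]
  exact (congrArg _ (map_zero ((homSystemIso I M).hom.app j).hom)).trans (map_zero _)

lemma mem_range_localCohomologyZeroι (M : ModuleCat.{u} R) (m : M) :
    m ∈ Set.range (localCohomologyZeroι I M) ↔ ∃ t : ℕ, ∀ a ∈ I ^ t, a • m = 0 := by
  constructor
  · rintro ⟨x, rfl⟩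
    obtain ⟨j, f, rfl⟩ := exists_homSystem_eq I M x
    rw [localCohomologyZeroι_apply]
    refine ⟨j.unop.unop, fun a ha => ?_⟩
    have h : a • (Ideal.Quotient.mk ((idealPowersDiagram I).obj j.unop) 1) = 0 := by
      rw [← Ideal.Quotient.mk_eq_mk, ← Submodule.Quotient.mk_smul, smul_eq_mul, mul_one,
        Ideal.Quotient.mk_eq_mk, Ideal.Quotient.eq_zero_iff_mem]
      exact ha
    refine (f.hom.map_smul a _).symm.trans ?_
    exact (congrArg f.hom h).trans (map_zero f.hom)
  · rintro ⟨t, ht⟩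
    let g : R ⧸ I ^ t →ₗ[R] M := (I ^ t).liftQ (LinearMap.toSpanSingleton R M m) fun a ha => ht a ha
    refine ⟨_, (localCohomologyZeroι_apply I M (Opposite.op (Opposite.op t))
      (ModuleCat.ofHom g)).trans ?_⟩
    exact one_smul R m

lemma localCohomologyZeroι_naturality {M N : ModuleCat.{u} R} (f : M ⟶ N)
    (x : (localCohomology I 0).obj M) :
    localCohomologyZeroι I N ((localCohomology I 0).map f x) = f (localCohomologyZeroι I M x) := by
  obtain ⟨j, g, rfl⟩ := exists_homSystem_eq I M x
  rw [localCohomologyZeroι_apply]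
  have hcocone := ConcreteCategory.congr_hom (localCohomologyCocone_map I 0 f j)
    ((homSystemIso I M).hom.app j g)
  have hext := ConcreteCategory.congr_hom (NatTrans.congr_app (homIsoExtZero_naturality f)
    ((ringModIdeals (idealPowersDiagram I)).op.obj j)) g
  refine (congrArg (localCohomologyZeroι I N) (hcocone.trans
    (congrArg ((localCohomologyCocone I 0 N).ι.app j) hext))).trans ?_
  exact localCohomologyZeroι_apply I N j (g ≫ f)

end ZerothLocalCohomology

section Unbundled

variable {R : Type u} [CommRing R] (I : Ideal R) (i : ℕ)

/-- The local cohomology `H^i_I(M)` of an unbundled module `M`. -/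
def LocalCohomology (M : Type u) [AddCommGroup M] [Module R M] : Type u :=
  (localCohomology I i).obj (ModuleCat.of R M)

namespace LocalCohomology

variable (M N P : Type u) [AddCommGroup M] [Module R M] [AddCommGroup N] [Module R N]
  [AddCommGroup P] [Module R P]

noncomputable instance : AddCommGroup (LocalCohomology I i M) :=
  inferInstanceAs (AddCommGroup ((localCohomology I i).obj (ModuleCat.of R M)))

noncomputable instance : Module R (LocalCohomology I i M) :=
  inferInstanceAs (Module R ((localCohomology I i).obj (ModuleCat.of R M)))

variable {M N P}

/-- Functoriality of local cohomology. -/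
noncomputable def map (f : M →ₗ[R] N) : LocalCohomology I i M →ₗ[R] LocalCohomology I i N :=
  ((localCohomology I i).map (ModuleCat.ofHom f)).hom

lemma map_id : map I i (LinearMap.id : M →ₗ[R] M) = LinearMap.id := by
  have h := (localCohomology I i).map_id (ModuleCat.of R M)
  exact congrArg ModuleCat.Hom.hom h

lemma map_comp (f : M →ₗ[R] N) (g : N →ₗ[R] P) :
    map I i (g ∘ₗ f) = map I i g ∘ₗ map I i f := by
  have h := (localCohomology I i).map_comp (ModuleCat.ofHom f) (ModuleCat.ofHom g)
  exact congrArg ModuleCat.Hom.hom h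

/-- A short exact sequence of unbundled modules as a short complex. -/
noncomputable def shortComplex {f : M →ₗ[R] N} {g : N →ₗ[R] P} (hfg : Function.Exact f g) :
    ShortComplex (ModuleCat.{u} R) :=
  ShortComplex.mk (ModuleCat.ofHom f) (ModuleCat.ofHom g) (by
    ext x
    exact hfg.apply_apply_eq_zero x)

lemma shortExact {f : M →ₗ[R] N} {g : N →ₗ[R] P} (hf : Function.Injective f)
    (hg : Function.Surjective g) (hfg : Function.Exact f g) : (shortComplex hfg).ShortExact :=
  ShortComplex.ShortExact.mk' ((ShortComplex.ShortExact.moduleCat_exact_iff_function_exact _).2 hfg)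
    ((ModuleCat.mono_iff_injective _).2 hf) ((ModuleCat.epi_iff_surjective _).2 hg)

/-- The connecting homomorphism. -/
noncomputable def delta {f : M →ₗ[R] N} {g : N →ₗ[R] P} (hf : Function.Injective f)
    (hg : Function.Surjective g) (hfg : Function.Exact f g) :
    LocalCohomology I i P →ₗ[R] LocalCohomology I (i + 1) M :=
  (localCohomologyDelta I (shortExact hf hg hfg) i).hom

lemma map_smul_id (r : R) : map I i (r • (LinearMap.id : M →ₗ[R] M)) = r • LinearMap.id :=
  LinearMap.ext (localCohomology_map_smul_id I i (ModuleCat.of R M) r)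

lemma exact_mid {f : M →ₗ[R] N} {g : N →ₗ[R] P} (hf : Function.Injective f)
    (hg : Function.Surjective g) (hfg : Function.Exact f g) :
    Function.Exact (map I i f) (map I i g) :=
  localCohomology_exact_mid I (shortExact hf hg hfg) i

lemma exact_right {f : M →ₗ[R] N} {g : N →ₗ[R] P} (hf : Function.Injective f)
    (hg : Function.Surjective g) (hfg : Function.Exact f g) :
    Function.Exact (map I i g) (delta I i hf hg hfg) :=
  localCohomology_exact_right I (shortExact hf hg hfg) i

lemma exact_left {f : M →ₗ[R] N} {g : N →ₗ[R] P} (hf : Function.Injective f)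
    (hg : Function.Surjective g) (hfg : Function.Exact f g) :
    Function.Exact (delta I i hf hg hfg) (map I (i + 1) f) :=
  localCohomology_exact_left I (shortExact hf hg hfg) i

instance subsingleton_succ_of_injective (E : Type u) [AddCommGroup E] [Module R E]
    [Module.Injective R E] : Subsingleton (LocalCohomology I (i + 1) E) := by
  have := Module.injective_object_of_injective_module R E
  exact subsingleton_localCohomology_succ_of_injective I i (ModuleCat.of R E)

variable (M) in
/-- The inclusion `H^0_I(M) → M`. -/
noncomputable def zeroι : LocalCohomology I 0 M →ₗ[R] M :=
  (localCohomologyZeroι I (ModuleCat.of R M)).hom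

variable (M) in
lemma zeroι_injective : Function.Injective (zeroι I M) :=
  localCohomologyZeroι_injective I (ModuleCat.of R M)

lemma mem_range_zeroι {m : M} :
    m ∈ LinearMap.range (zeroι I M) ↔ ∃ t : ℕ, ∀ a ∈ I ^ t, a • m = 0 :=
  mem_range_localCohomologyZeroι I (ModuleCat.of R M) m

lemma zeroι_map (f : M →ₗ[R] N) (x : LocalCohomology I 0 M) :
    zeroι I N (map I 0 f x) = f (zeroι I M x) :=
  localCohomologyZeroι_naturality I (ModuleCat.ofHom f) x

variable (M) in
/-- Local cohomology only depends on the radical of the ideal. -/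
noncomputable def equivOfRadicalEq [IsNoetherianRing R] {I J : Ideal R}
    (h : I.radical = J.radical) : LocalCohomology I i M ≃ₗ[R] LocalCohomology J i M :=
  ((localCohomology.isoOfSameRadical h i).app (ModuleCat.of R M)).toLinearEquiv

end LocalCohomology

variable (R) in
lemma exists_injective_embedding (M : Type u) [AddCommGroup M] [Module R M] :
    ∃ (E : Type u) (_ : AddCommGroup E) (_ : Module R E) (f : M →ₗ[R] E),
      Module.Injective R E ∧ Function.Injective f := by
  let E : ModuleCat.{u} R := Injective.under (ModuleCat.of R M)
  have : Injective (ModuleCat.of R E) :=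
    inferInstanceAs (Injective (Injective.under (ModuleCat.of R M)))
  exact ⟨E, inferInstance, inferInstance, (Injective.ι (ModuleCat.of R M)).hom,
    Module.injective_module_of_injective_object R E,
    (ModuleCat.mono_iff_injective (Injective.ι (ModuleCat.of R M))).1 inferInstance⟩

end Unbundled

section PowTorsion

variable {R : Type u} [CommRing R]

/-- The `I`-power torsion submodule `Γ_I(M)` of `M`. -/
def powTorsion (I : Ideal R) (M : Type*) [AddCommGroup M] [Module R M] : Submodule R M where
  carrier := {m | ∃ t : ℕ, ∀ a ∈ I ^ t, a • m = 0}
  zero_mem' := ⟨0, fun a _ => smul_zero a⟩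
  add_mem' := by
    rintro m n ⟨s, hs⟩ ⟨t, ht⟩
    refine ⟨s + t, fun a ha => ?_⟩
    rw [smul_add, hs a (Ideal.pow_le_pow_right (Nat.le_add_right s t) ha),
      ht a (Ideal.pow_le_pow_right (Nat.le_add_left t s) ha), add_zero]
  smul_mem' := by
    rintro r m ⟨t, ht⟩
    exact ⟨t, fun a ha => by rw [smul_comm, ht a ha, smul_zero]⟩

variable {I J : Ideal R} {M N : Type*} [AddCommGroup M] [Module R M] [AddCommGroup N] [Module R N]

lemma mem_powTorsion {m : M} : m ∈ powTorsion I M ↔ ∃ t : ℕ, ∀ a ∈ I ^ t, a • m = 0 :=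
  Iff.rfl

lemma mem_powTorsion_span_singleton {x : R} {m : M} :
    m ∈ powTorsion (Ideal.span {x}) M ↔ ∃ k : ℕ, x ^ k • m = 0 := by
  refine exists_congr fun k => ?_
  rw [Ideal.span_singleton_pow]
  refine ⟨fun h => h _ (Ideal.mem_span_singleton_self _), fun h a ha => ?_⟩
  obtain ⟨b, rfl⟩ := Ideal.mem_span_singleton'.1 ha
  rw [mul_smul, h, smul_zero]

lemma powTorsion_sup (I J : Ideal R) (M : Type*) [AddCommGroup M] [Module R M] :
    powTorsion (I ⊔ J) M = powTorsion I M ⊓ powTorsion J M := by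
  ext m
  constructor
  · rintro ⟨t, ht⟩
    exact ⟨⟨t, fun a ha => ht a (Ideal.pow_right_mono le_sup_left t ha)⟩,
      ⟨t, fun a ha => ht a (Ideal.pow_right_mono le_sup_right t ha)⟩⟩
  · rintro ⟨⟨s, hs⟩, t, ht⟩
    refine ⟨s + t, fun a ha => ?_⟩
    obtain ⟨b, hb, c, hc, rfl⟩ := Submodule.mem_sup.1 (Ideal.sup_pow_add_le_pow_sup_pow ha)
    rw [add_smul, hs b hb, ht c hc, add_zero]

lemma powTorsion_anti (h : I ≤ J) (M : Type*) [AddCommGroup M] [Module R M] :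
    powTorsion J M ≤ powTorsion I M :=
  fun _ ⟨t, ht⟩ => ⟨t, fun a ha => ht a (Ideal.pow_right_mono h t ha)⟩

lemma powTorsion_bot (M : Type*) [AddCommGroup M] [Module R M] :
    powTorsion (⊥ : Ideal R) M = ⊤ :=
  Submodule.eq_top_iff'.2 fun m => ⟨1, fun a ha => by
    rw [pow_one, Ideal.mem_bot] at ha
    rw [ha, zero_smul]⟩

lemma map_mem_powTorsion (f : M →ₗ[R] N) {m : M} (hm : m ∈ powTorsion I M) :
    f m ∈ powTorsion I N := by
  obtain ⟨t, ht⟩ := hm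
  exact ⟨t, fun a ha => by rw [← map_smul, ht a ha, map_zero]⟩

lemma map_mem_powTorsion_iff {f : M →ₗ[R] N} (hf : Function.Injective f) {m : M} :
    f m ∈ powTorsion I N ↔ m ∈ powTorsion I M := by
  refine ⟨fun ⟨t, ht⟩ => ⟨t, fun a ha => hf ?_⟩, map_mem_powTorsion f⟩
  rw [map_smul, ht a ha, map_zero]

lemma powTorsion_eq_top_of_injective {f : M →ₗ[R] N} (hf : Function.Injective f)
    (hN : powTorsion I N = ⊤) : powTorsion I M = ⊤ :=
  Submodule.eq_top_iff'.2 fun _ => (map_mem_powTorsion_iff hf).1 (hN ▸ Submodule.mem_top)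

lemma powTorsion_eq_top_of_surjective {f : M →ₗ[R] N} (hf : Function.Surjective f)
    (hM : powTorsion I M = ⊤) : powTorsion I N = ⊤ :=
  Submodule.eq_top_iff'.2 <| hf.forall.2 fun _ => map_mem_powTorsion f (hM ▸ Submodule.mem_top)

lemma powTorsion_eq_top_of_le_annihilator (h : I ≤ Module.annihilator R M) :
    powTorsion I M = ⊤ :=
  Submodule.eq_top_iff'.2 fun m => ⟨1, fun _ ha =>
    Module.mem_annihilator.1 (h (by rwa [pow_one] at ha)) m⟩

lemma powTorsion_powTorsion (I : Ideal R) (M : Type*) [AddCommGroup M] [Module R M] :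
    powTorsion I (powTorsion I M) = ⊤ :=
  Submodule.eq_top_iff'.2 fun m =>
    (map_mem_powTorsion_iff (powTorsion I M).injective_subtype).1 m.2

/-- The functoriality of `Γ_I`. -/
def powTorsionMap (I : Ideal R) (f : M →ₗ[R] N) : powTorsion I M →ₗ[R] powTorsion I N :=
  f.restrict fun _ => map_mem_powTorsion f

lemma exists_pow_le_annihilator [Module.Finite R M] (h : powTorsion I M = ⊤) :
    ∃ t : ℕ, I ^ t ≤ Module.annihilator R M := by
  obtain ⟨s, hs⟩ := Module.Finite.fg_top (R := R) (M := M)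
  choose t ht using fun m : M => mem_powTorsion.1 (h ▸ Submodule.mem_top : m ∈ powTorsion I M)
  refine ⟨s.sup t, fun a ha => ?_⟩
  rw [← Submodule.annihilator_top, ← hs, Submodule.mem_annihilator_span]
  exact fun m => ht m a (Ideal.pow_le_pow_right (Finset.le_sup m.2) ha)

end PowTorsion

section Injective

variable {R : Type u} [CommRing R]

lemma exists_extension_of_ker_le {X Y E : Type u} [AddCommGroup X] [Module R X] [AddCommGroup Y]
    [Module R Y] [AddCommGroup E] [Module R E] [Module.Injective R E] (f : X →ₗ[R] Y)
    (g : X →ₗ[R] E) (h : LinearMap.ker f ≤ LinearMap.ker g) :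
    ∃ φ : Y →ₗ[R] E, ∀ z, φ (f z) = g z := by
  obtain ⟨φ, hφ⟩ := Module.Injective.out ((LinearMap.ker f).liftQ f le_rfl)
    (LinearMap.ker_eq_bot.1 (Submodule.ker_liftQ_eq_bot' _ _ rfl))
    ((LinearMap.ker f).liftQ g h)
  exact ⟨φ, fun z => hφ (Submodule.Quotient.mk z)⟩

variable [IsNoetherianRing R]

lemma exists_comap_subtype_pow_le (I K : Ideal R) (t : ℕ) :
    ∃ n : ℕ, Submodule.comap K.subtype (I ^ n) ≤ I ^ t • (⊤ : Submodule R K) := by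
  obtain ⟨c, hc⟩ := I.exists_pow_inf_eq_pow_smul K
  refine ⟨t + c, fun z hz => ?_⟩
  have hzK : (z : R) ∈ I ^ (t + c) • (⊤ : Submodule R R) ⊓ K := by
    rw [smul_eq_mul, Ideal.mul_top]
    exact ⟨hz, z.2⟩
  rw [hc _ (Nat.le_add_left c t), Nat.add_sub_cancel] at hzK
  have hzmap : (z : R) ∈ (I ^ t • (⊤ : Submodule R K)).map K.subtype := by
    rw [Submodule.map_smul'', Submodule.map_subtype_top]
    exact Submodule.smul_mono le_rfl inf_le_right hzK
  obtain ⟨y, hy, hyz⟩ := hzmap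
  exact K.injective_subtype hyz ▸ hy

instance injective_powTorsion (I : Ideal R) (E : Type u) [AddCommGroup E] [Module R E]
    [Module.Injective R E] : Module.Injective R (powTorsion I E) := by
  refine Module.Baer.injective fun K g => ?_
  obtain ⟨t, ht⟩ := exists_pow_le_annihilator (powTorsion_eq_top_of_injective
    (LinearMap.range g).injective_subtype (powTorsion_powTorsion I E))
  obtain ⟨n, hn⟩ := exists_comap_subtype_pow_le I K t
  have hg : I ^ t • (⊤ : Submodule R K) ≤ LinearMap.ker g := Submodule.smul_le.2 fun a ha y _ => by
    rw [LinearMap.mem_ker, map_smul]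
    exact congrArg Subtype.val (Module.mem_annihilator.1 (ht ha) ⟨g y, y, rfl⟩)
  have hker : LinearMap.ker ((I ^ n).mkQ ∘ₗ K.subtype) ≤
      LinearMap.ker ((powTorsion I E).subtype ∘ₗ g) := by
    rw [LinearMap.ker_comp, Submodule.ker_mkQ]
    exact (hn.trans hg).trans (LinearMap.ker_le_ker_comp _ _)
  obtain ⟨φ, hφ⟩ := exists_extension_of_ker_le _ _ hker
  have hφ_mem (y : R ⧸ I ^ n) : φ y ∈ powTorsion I E := map_mem_powTorsion φ
    ⟨n, fun a ha => Module.mem_annihilator.1 (by rwa [Ideal.annihilator_quotient]) y⟩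
  exact ⟨φ.codRestrict _ hφ_mem ∘ₗ (I ^ n).mkQ, fun z hz => Subtype.ext (hφ ⟨z, hz⟩)⟩

lemma exists_pow_mul_eq_zero_of_pow_add_mul_eq_zero (x : R) :
    ∃ N : ℕ, ∀ (k : ℕ) (r : R), x ^ (N + k) * r = 0 → x ^ N * r = 0 := by
  obtain ⟨N, hN⟩ := monotone_stabilizes_iff_noetherian.2 ‹_›
    (LinearMap.mulLeft R x).iterateKer
  refine ⟨N, fun k r hr => ?_⟩
  have := hN (N + k) (Nat.le_add_right N k)
  simpa [LinearMap.iterateKer, LinearMap.pow_mulLeft, hr] using SetLike.ext_iff.1 this r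

lemma exists_pow_smul_eq_of_injective (x : R) (E : Type u) [AddCommGroup E] [Module R E]
    [Module.Injective R E] : ∃ N : ℕ, ∀ (k : ℕ) (e : E), ∃ e', x ^ N • e = x ^ (N + k) • e' := by
  obtain ⟨N, hN⟩ := exists_pow_mul_eq_zero_of_pow_add_mul_eq_zero x
  refine ⟨N, fun k e => ?_⟩
  obtain ⟨φ, hφ⟩ := exists_extension_of_ker_le (LinearMap.toSpanSingleton R R (x ^ (N + k)))
    (LinearMap.toSpanSingleton R E (x ^ N • e)) fun r hr => by
      rw [LinearMap.mem_ker, LinearMap.toSpanSingleton_apply, smul_eq_mul, mul_comm] at hr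
      rw [LinearMap.mem_ker, LinearMap.toSpanSingleton_apply, smul_smul, mul_comm, hN k r hr,
        zero_smul]
  refine ⟨φ 1, ?_⟩
  have := hφ 1
  simp only [LinearMap.toSpanSingleton_apply, one_smul] at this
  rw [← this, ← map_smul, smul_eq_mul, mul_one]

end Injective

section DimensionShifting

variable {R : Type u} [CommRing R]

lemma nonempty_equiv_of_ker_eq {X Y Z : Type*} [AddCommGroup X] [Module R X] [AddCommGroup Y]
    [Module R Y] [AddCommGroup Z] [Module R Z] {f : X →ₗ[R] Y} {g : X →ₗ[R] Z}
    (hf : Function.Surjective f) (hg : Function.Surjective g)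
    (h : LinearMap.ker f = LinearMap.ker g) : Nonempty (Y ≃ₗ[R] Z) :=
  ⟨(f.quotKerEquivOfSurjective hf).symm ≪≫ₗ Submodule.quotEquivOfEq _ _ h ≪≫ₗ
    g.quotKerEquivOfSurjective hg⟩

variable (R) in
lemma exists_injective_embedding_powTorsion_eq_top [IsNoetherianRing R] {J : Ideal R}
    {M : Type u} [AddCommGroup M] [Module R M] (hM : powTorsion J M = ⊤) :
    ∃ (E : Type u) (_ : AddCommGroup E) (_ : Module R E) (f : M →ₗ[R] E),
      Module.Injective R E ∧ Function.Injective f ∧ powTorsion J E = ⊤ := by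
  obtain ⟨E, _, _, f, hE, hf⟩ := exists_injective_embedding (R := R) M
  exact ⟨powTorsion J E, inferInstance, inferInstance,
    f.codRestrict _ fun m => map_mem_powTorsion f (hM ▸ Submodule.mem_top), inferInstance,
    fun m n h => hf (congrArg Subtype.val h), powTorsion_powTorsion J E⟩

namespace LocalCohomology

variable (I J : Ideal R) (M : Type u) {N E C : Type u} [AddCommGroup M] [Module R M]
  [AddCommGroup N] [Module R N] [AddCommGroup E] [Module R E] [AddCommGroup C] [Module R C]

/-- The identification of `H^0_I(M)` with `Γ_I(M)`. -/
noncomputable def zeroEquiv : LocalCohomology I 0 M ≃ₗ[R] powTorsion I M :=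
  LinearEquiv.ofInjective (zeroι I M) (zeroι_injective I M) ≪≫ₗ
    LinearEquiv.ofEq _ _ (Submodule.ext fun _ => mem_range_zeroι I)

variable {M}

lemma zeroEquiv_map (f : M →ₗ[R] N) (z : LocalCohomology I 0 M) :
    (zeroEquiv I N (map I 0 f z) : N) = f (zeroEquiv I M z) :=
  zeroι_map I f z

variable (M) in
lemma subsingleton_of_subsingleton (i : ℕ) [Subsingleton M] :
    Subsingleton (LocalCohomology I i M) := by
  refine subsingleton_of_forall_eq 0 fun z => ?_
  have hid : (LinearMap.id : M →ₗ[R] M) = (0 : R) • LinearMap.id := Subsingleton.elim _ _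
  rw [← LinearMap.id_apply (R := R) z, ← map_id, hid, map_smul_id, zero_smul, LinearMap.zero_apply]

section Injective

variable [Module.Injective R E] {f : M →ₗ[R] E} {g : E →ₗ[R] C} (hf : Function.Injective f)
  (hg : Function.Surjective g) (hfg : Function.Exact f g)

lemma delta_surjective (i : ℕ) : Function.Surjective (delta I i hf hg hfg) := fun y =>
  (exact_left I i hf hg hfg y).1 (Subsingleton.elim _ _)

/-- Dimension shifting along an embedding into an injective module. -/
noncomputable def shiftEquiv (i : ℕ) :
    LocalCohomology I (i + 1) C ≃ₗ[R] LocalCohomology I (i + 2) M :=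
  LinearEquiv.ofBijective (delta I (i + 1) hf hg hfg) ⟨by
    rw [injective_iff_map_eq_zero]
    intro z hz
    obtain ⟨y, rfl⟩ := (exact_right I (i + 1) hf hg hfg z).1 hz
    rw [Subsingleton.elim y 0, map_zero], delta_surjective I hf hg hfg (i + 1)⟩

include hf hg hfg in
lemma exists_surjective_powTorsion :
    ∃ δ : powTorsion I C →ₗ[R] LocalCohomology I 1 M, Function.Surjective δ ∧
      ∀ c, δ c = 0 ↔ ∃ e ∈ powTorsion I E, g e = c := by
  refine ⟨delta I 0 hf hg hfg ∘ₗ (zeroEquiv I C).symm.toLinearMap,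
    (delta_surjective I hf hg hfg 0).comp (zeroEquiv I C).symm.surjective, fun c => ?_⟩
  refine (exact_right I 0 hf hg hfg _).trans ⟨?_, ?_⟩
  · rintro ⟨z, hz⟩
    refine ⟨_, (zeroEquiv I E z).2, ?_⟩
    rw [← zeroEquiv_map, hz, LinearEquiv.coe_coe, LinearEquiv.apply_symm_apply]
  · rintro ⟨e, he, hec⟩
    refine ⟨(zeroEquiv I E).symm ⟨e, he⟩, (zeroEquiv I C).injective (Subtype.ext ?_)⟩
    rw [zeroEquiv_map, LinearEquiv.coe_coe, LinearEquiv.apply_symm_apply,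
      LinearEquiv.apply_symm_apply, hec]

end Injective

lemma powTorsion_self_eq_top (i : ℕ) (M : Type u) [AddCommGroup M] [Module R M] :
    powTorsion I (LocalCohomology I i M) = ⊤ := by
  induction i generalizing M with
  | zero =>
    exact powTorsion_eq_top_of_injective (zeroEquiv I M).injective (powTorsion_powTorsion I M)
  | succ i ih =>
    obtain ⟨E, _, _, f, hE, hf⟩ := exists_injective_embedding (R := R) M
    exact powTorsion_eq_top_of_surjective (delta_surjective I hf (Submodule.mkQ_surjective _)
      (LinearMap.exact_map_mkQ_range f) i) (ih _)

variable [IsNoetherianRing R]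

lemma powTorsion_eq_top {J : Ideal R} (i : ℕ) {M : Type u} [AddCommGroup M] [Module R M]
    (hM : powTorsion J M = ⊤) : powTorsion J (LocalCohomology I i M) = ⊤ := by
  induction i generalizing M with
  | zero => exact powTorsion_eq_top_of_injective (zeroι_injective I M) hM
  | succ i ih =>
    obtain ⟨E, _, _, f, hE, hf, hEJ⟩ := exists_injective_embedding_powTorsion_eq_top R hM
    exact powTorsion_eq_top_of_surjective (delta_surjective I hf (Submodule.mkQ_surjective _)
      (LinearMap.exact_map_mkQ_range f) i)
      (ih (powTorsion_eq_top_of_surjective (Submodule.mkQ_surjective _) hEJ))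

lemma subsingleton_succ_of_powTorsion_eq_top {I : Ideal R} (i : ℕ) {M : Type u} [AddCommGroup M]
    [Module R M] (hM : powTorsion I M = ⊤) : Subsingleton (LocalCohomology I (i + 1) M) := by
  induction i generalizing M with
  | zero =>
    obtain ⟨E, _, _, f, hE, hf, hEI⟩ := exists_injective_embedding_powTorsion_eq_top R hM
    obtain ⟨δ, hδ, hδ_zero⟩ := exists_surjective_powTorsion I hf (Submodule.mkQ_surjective _)
      (LinearMap.exact_map_mkQ_range f)
    refine subsingleton_of_forall_eq 0 <| hδ.forall.2 fun c => (hδ_zero c).2 ?_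
    obtain ⟨e, he⟩ := Submodule.mkQ_surjective _ c.1
    exact ⟨e, hEI ▸ Submodule.mem_top, he⟩
  | succ i ih =>
    obtain ⟨E, _, _, f, hE, hf, hEI⟩ := exists_injective_embedding_powTorsion_eq_top R hM
    have := ih (powTorsion_eq_top_of_surjective (Submodule.mkQ_surjective (LinearMap.range f)) hEI)
    exact (shiftEquiv I hf (Submodule.mkQ_surjective _)
      (LinearMap.exact_map_mkQ_range f) i).symm.subsingleton

lemma nonempty_equiv_sup_of_powTorsion_eq_top {J : Ideal R} (i : ℕ) {M : Type u}
    [AddCommGroup M] [Module R M] (hM : powTorsion J M = ⊤) :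
    Nonempty (LocalCohomology (I ⊔ J) i M ≃ₗ[R] LocalCohomology I i M) := by
  have powTorsion_sup_eq {N : Type u} [AddCommGroup N] [Module R N] (hN : powTorsion J N = ⊤) :
      powTorsion (I ⊔ J) N = powTorsion I N := by
    rw [powTorsion_sup, hN, inf_top_eq]
  induction i generalizing M with
  | zero =>
    exact ⟨zeroEquiv _ M ≪≫ₗ LinearEquiv.ofEq _ _ (powTorsion_sup_eq hM) ≪≫ₗ
      (zeroEquiv I M).symm⟩
  | succ i ih =>
    obtain ⟨E, _, _, f, hE, hf, hEJ⟩ := exists_injective_embedding_powTorsion_eq_top R hM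
    let g := (LinearMap.range f).mkQ
    have hg : Function.Surjective g := Submodule.mkQ_surjective _
    have hfg : Function.Exact f g := LinearMap.exact_map_mkQ_range f
    have hCJ := powTorsion_eq_top_of_surjective hg hEJ
    cases i with
    | zero =>
      obtain ⟨δ, hδ, hδ_zero⟩ := exists_surjective_powTorsion (I ⊔ J) hf hg hfg
      obtain ⟨δ', hδ', hδ'_zero⟩ := exists_surjective_powTorsion I hf hg hfg
      refine nonempty_equiv_of_ker_eq hδ (hδ'.comp
        (LinearEquiv.ofEq _ _ (powTorsion_sup_eq hCJ)).surjective) (Submodule.ext fun c => ?_)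
        (g := δ' ∘ₗ (LinearEquiv.ofEq _ _ (powTorsion_sup_eq hCJ)).toLinearMap)
      rw [LinearMap.mem_ker, LinearMap.mem_ker, hδ_zero, LinearMap.comp_apply, hδ'_zero,
        powTorsion_sup_eq hEJ]
      rfl
    | succ i =>
      exact (ih hCJ).map fun e =>
        (shiftEquiv (I ⊔ J) hf hg hfg i).symm ≪≫ₗ e ≪≫ₗ shiftEquiv I hf hg hfg i

end LocalCohomology

end DimensionShifting

section AwayQuotient

open scoped TensorProduct

variable {R : Type u} [CommRing R] (x : R)

/-- The cokernel `R_x / R` of the localization map `R → R_x`. Tensoring with it computes the top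
local cohomology with support in the principal ideal `(x)`. -/
abbrev AwayQuotient : Type u :=
  Localization.Away x ⧸ LinearMap.range (Algebra.linearMap R (Localization.Away x))

namespace AwayQuotient

section

variable (N : Type*) [AddCommGroup N] [Module R N]

/-- The canonical projection `N_x = R_x ⊗ N → (R_x / R) ⊗ N`. -/
noncomputable def proj : Localization.Away x ⊗[R] N →ₗ[R] AwayQuotient x ⊗[R] N :=
  LinearMap.rTensor N (Submodule.mkQ _)

lemma proj_surjective : Function.Surjective (proj x N) :=
  LinearMap.rTensor_surjective N (Submodule.mkQ_surjective _)

lemma exact_mk_proj :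
    Function.Exact (TensorProduct.mk R (Localization.Away x) N 1) (proj x N) := by
  have hexact := rTensor_exact N
    (LinearMap.exact_map_mkQ_range (Algebra.linearMap R (Localization.Away x)))
    (Submodule.mkQ_surjective _)
  intro z
  refine (hexact z).trans ((TensorProduct.lid R N).symm.surjective.exists.trans ?_)
  simp only [TensorProduct.lid_symm_apply, LinearMap.rTensor_tmul, Algebra.linearMap_apply,
    map_one, Set.mem_range, TensorProduct.mk_apply]

lemma mk_eq_zero_iff {n : N} :
    TensorProduct.mk R (Localization.Away x) N 1 n = 0 ↔ n ∈ powTorsion (Ideal.span {x}) N := by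
  rw [IsLocalizedModule.eq_zero_iff (Submonoid.powers x), mem_powTorsion_span_singleton,
    Subtype.exists]
  simp only [Submonoid.mk_smul, exists_prop, Submonoid.mem_powers_iff, exists_exists_eq_and]

lemma exact_inclusion_mk (I : Ideal R) :
    Function.Exact (Submodule.inclusion (powTorsion_anti (le_sup_left : I ≤ I ⊔ Ideal.span {x}) N))
      (TensorProduct.mk R (Localization.Away x) (powTorsion I N) 1) := by
  rw [LinearMap.exact_iff, Submodule.range_inclusion]
  ext n
  rw [LinearMap.mem_ker, mk_eq_zero_iff, ← map_mem_powTorsion_iff (Submodule.injective_subtype _),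
    Submodule.mem_comap, powTorsion_sup, Submodule.mem_inf, Submodule.subtype_apply]
  exact (and_iff_right n.2).symm

variable {N}

lemma subsingleton_tensor {k : ℕ} (h : ∀ (l : ℕ) (n : N), ∃ n', x ^ k • n = x ^ (k + l) • n') :
    Subsingleton (AwayQuotient x ⊗[R] N) := by
  refine subsingleton_of_forall_eq 0 <| (proj_surjective x N).forall.2 fun y => ?_
  let ι := TensorProduct.mk R (Localization.Away x) N 1
  obtain ⟨⟨n, ⟨_, l, rfl⟩⟩, hy : x ^ l • y = ι n⟩ :=
    IsLocalizedModule.surj (Submonoid.powers x) ι y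
  obtain ⟨n', hn'⟩ := h l n
  refine (exact_mk_proj x N y).2 ⟨n', IsLocalizedModule.smul_injective ι
    (⟨x ^ (k + l), k + l, rfl⟩ : Submonoid.powers x) ?_⟩
  change x ^ (k + l) • ι n' = x ^ (k + l) • y
  rw [← map_smul, ← hn', map_smul, ← hy, smul_smul, pow_add]

end

lemma nonempty_tensor_equiv_of_exact {A B C : Type*} [AddCommGroup A] [Module R A]
    [AddCommGroup B] [Module R B] [AddCommGroup C] [Module R C] {f : A →ₗ[R] B} {g : B →ₗ[R] C}
    (hfg : Function.Exact f g) (hg : Function.Surjective g) (Q : Type*) [AddCommGroup Q]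
    [Module R Q] [Subsingleton (Q ⊗[R] A)] :
    Nonempty (Q ⊗[R] B ≃ₗ[R] Q ⊗[R] C) := by
  refine ⟨LinearEquiv.ofBijective (LinearMap.lTensor Q g) ⟨?_, LinearMap.lTensor_surjective Q hg⟩⟩
  rw [injective_iff_map_eq_zero]
  intro z hz
  obtain ⟨y, rfl⟩ := (lTensor_exact Q hfg hg z).1 hz
  rw [Subsingleton.elim y 0, map_zero]

variable [IsNoetherianRing R] (I : Ideal R)

lemma subsingleton_tensor_of_injective (E : Type u) [AddCommGroup E] [Module R E]
    [Module.Injective R E] : Subsingleton (AwayQuotient x ⊗[R] E) :=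
  let ⟨_, h⟩ := exists_pow_smul_eq_of_injective x E
  subsingleton_tensor x h

lemma subsingleton_tensor_localCohomology_of_injective (i : ℕ) (E : Type u) [AddCommGroup E]
    [Module R E] [Module.Injective R E] :
    Subsingleton (AwayQuotient x ⊗[R] LocalCohomology I i E) := by
  cases i with
  | zero =>
    have := subsingleton_tensor_of_injective x (powTorsion I E)
    exact ((LocalCohomology.zeroEquiv I E).lTensor (AwayQuotient x)).subsingleton
  | succ i => infer_instance

lemma exists_surjective_tensor_powTorsion {M E C : Type u} [AddCommGroup M] [Module R M]
    [AddCommGroup E] [Module R E] [AddCommGroup C] [Module R C] [Module.Injective R E]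
    {f : M →ₗ[R] E} {g : E →ₗ[R] C} (hf : Function.Injective f) (hfg : Function.Exact f g)
    (hg : Function.Surjective (powTorsionMap I g)) :
    ∃ δ : powTorsion (I ⊔ Ideal.span {x}) C →ₗ[R] AwayQuotient x ⊗[R] powTorsion I M,
      Function.Surjective δ ∧ ∀ c, δ c = 0 ↔ ∃ e ∈ powTorsion (I ⊔ Ideal.span {x}) E, g e = c := by
  have hexact : Function.Exact (powTorsionMap I f) (powTorsionMap I g) := fun e => by
    constructor
    · intro he
      obtain ⟨m, hm⟩ := (hfg e).1 (congrArg Subtype.val he)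
      exact ⟨⟨m, (map_mem_powTorsion_iff hf).1 (hm ▸ e.2)⟩, Subtype.ext hm⟩
    · rintro ⟨m, rfl⟩
      exact Subtype.ext (hfg.apply_apply_eq_zero m)
  have hinj : Function.Injective (powTorsionMap I f) := fun m n h =>
    Subtype.ext (hf (congrArg Subtype.val h))
  have := subsingleton_tensor_of_injective x (powTorsion I E)
  let ι (N : Type u) [AddCommGroup N] [Module R N] :=
    TensorProduct.mk R (Localization.Away x) (powTorsion I N) 1
  let j (N : Type u) [AddCommGroup N] [Module R N] :=
    Submodule.inclusion (powTorsion_anti (le_sup_left : I ≤ I ⊔ Ideal.span {x}) N)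
  let δ := SnakeLemma.δ' (ι M) (ι E) (ι C) _ _ hexact _ _
    (Module.Flat.lTensor_exact (Localization.Away x) hexact) rfl rfl (j C)
    (exact_inclusion_mk x C I) _ (exact_mk_proj x _) hg
    (Module.Flat.lTensor_preserves_injective_linearMap _ hinj)
  have hδ_left : Function.Exact δ (0 : _ →ₗ[R] AwayQuotient x ⊗[R] powTorsion I E) :=
    SnakeLemma.exact_δ'_left (ι M) (ι E) (ι C) _ _ hexact _ _ _ rfl rfl (j C) _ _ _ _
      (exact_mk_proj x _) hg _ 0 (Subsingleton.elim _ _) (proj_surjective x _)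
  have hδ_right : Function.Exact (powTorsionMap (I ⊔ Ideal.span {x}) g) δ :=
    SnakeLemma.exact_δ'_right (ι M) (ι E) (ι C) _ _ hexact _ _ _ rfl rfl (j E)
      (exact_inclusion_mk x E I) (j C) _ _ _ hg _ _ rfl (Submodule.inclusion_injective _)
  refine ⟨δ, fun y => (hδ_left y).1 rfl, fun c => (hδ_right c).trans ⟨?_, ?_⟩⟩
  · rintro ⟨e, rfl⟩
    exact ⟨e, e.2, rfl⟩
  · rintro ⟨e, he, hec⟩
    exact ⟨⟨e, he⟩, Subtype.ext hec⟩

end AwayQuotient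

namespace LocalCohomology

variable [IsNoetherianRing R] (I : Ideal R)

lemma nonempty_tensor_zero_equiv {M : Type u} [AddCommGroup M] [Module R M]
    [Subsingleton (LocalCohomology I 1 M)] :
    Nonempty (AwayQuotient x ⊗[R] LocalCohomology I 0 M ≃ₗ[R]
      LocalCohomology (I ⊔ Ideal.span {x}) 1 M) := by
  obtain ⟨E, _, _, f, hE, hf⟩ := exists_injective_embedding (R := R) M
  have hg := Submodule.mkQ_surjective (LinearMap.range f)
  have hfg := LinearMap.exact_map_mkQ_range f
  have hpow : Function.Surjective (powTorsionMap I (LinearMap.range f).mkQ) := fun c => by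
    obtain ⟨δ, -, hδ⟩ := exists_surjective_powTorsion I hf hg hfg
    obtain ⟨e, he, hec⟩ := (hδ c).1 (Subsingleton.elim _ _)
    exact ⟨⟨e, he⟩, Subtype.ext hec⟩
  obtain ⟨δ, hδ, hδ_zero⟩ := AwayQuotient.exists_surjective_tensor_powTorsion x I hf hfg hpow
  obtain ⟨δ', hδ', hδ'_zero⟩ :=
    exists_surjective_powTorsion (I ⊔ Ideal.span {x}) hf hg hfg
  exact (nonempty_equiv_of_ker_eq hδ hδ' (Submodule.ext fun c =>
    (hδ_zero c).trans (hδ'_zero c).symm)).map fun e => (zeroEquiv I M).lTensor _ ≪≫ₗ e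

/-- This is the end of the exact sequence
`H^i_I(M) → H^i_I(M)_x → H^{i+1}_{I+(x)}(M) → H^{i+1}_I(M) = 0`. -/
lemma nonempty_tensor_equiv {i : ℕ} {M : Type u} [AddCommGroup M] [Module R M]
    [Subsingleton (LocalCohomology I (i + 1) M)] :
    Nonempty (AwayQuotient x ⊗[R] LocalCohomology I i M ≃ₗ[R]
      LocalCohomology (I ⊔ Ideal.span {x}) (i + 1) M) := by
  induction i generalizing M with
  | zero => exact nonempty_tensor_zero_equiv x I
  | succ i ih =>
    obtain ⟨E, _, _, f, hE, hf⟩ := exists_injective_embedding (R := R) M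
    have hg := Submodule.mkQ_surjective (LinearMap.range f)
    have hfg := LinearMap.exact_map_mkQ_range f
    have := AwayQuotient.subsingleton_tensor_localCohomology_of_injective x I i E
    have : Subsingleton (LocalCohomology I (i + 1) (E ⧸ LinearMap.range f)) :=
      (shiftEquiv I hf hg hfg i).subsingleton
    obtain ⟨e⟩ := ih (M := E ⧸ LinearMap.range f)
    obtain ⟨e'⟩ := AwayQuotient.nonempty_tensor_equiv_of_exact (exact_right I i hf hg hfg)
      (delta_surjective I hf hg hfg i) (AwayQuotient x)
    exact ⟨e'.symm ≪≫ₗ e ≪≫ₗ shiftEquiv _ hf hg hfg i⟩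

end LocalCohomology

end AwayQuotient

section Parameters

variable {R : Type u} [CommRing R] [IsNoetherianRing R] [IsLocalRing R]

open IsLocalRing

variable (R) in
lemma exists_list_length_eq_ringKrullDim_and_radical_eq_maximalIdeal :
    ∃ xs : List R, xs.length = ringKrullDim R ∧ (Ideal.ofList xs).radical = maximalIdeal R := by
  obtain ⟨s, hs, hcard⟩ := Ideal.exists_finset_card_eq_height_of_isNoetherianRing (maximalIdeal R)
  refine ⟨s.toList, ?_, ?_⟩
  · rw [← maximalIdeal_height_eq_ringKrullDim, ← hcard, Finset.length_toList]
    rfl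
  · have hspan : Ideal.ofList s.toList = Ideal.span (s : Set R) :=
      congrArg Ideal.span (Set.ext fun _ => Finset.mem_toList)
    rw [hspan, ← Ideal.sInf_minimalPrimes]
    exact le_antisymm (sInf_le hs) (le_sInf fun _ hq =>
      hs.2 hq.1 (le_maximalIdeal hq.1.1.ne_top))

lemma exists_list_radical_sup_eq_maximalIdeal {J : Ideal R} {d : ℕ}
    (hd : ringKrullDim (R ⧸ J) = d) :
    ∃ xs : List R, xs.length = d ∧ (J ⊔ Ideal.ofList xs).radical = maximalIdeal R := by
  have : Nontrivial (R ⧸ J) := by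
    by_contra h
    have := not_nontrivial_iff_subsingleton.1 h
    exact WithBot.bot_ne_coe (ringKrullDim_eq_bot_of_subsingleton.symm.trans hd)
  have : IsLocalRing (R ⧸ J) := .of_surjective' (Ideal.Quotient.mk J) Ideal.Quotient.mk_surjective
  obtain ⟨ys, hys, hrad⟩ :=
    exists_list_length_eq_ringKrullDim_and_radical_eq_maximalIdeal (R ⧸ J)
  obtain ⟨xs, rfl⟩ := List.map_surjective_iff.2 (Ideal.Quotient.mk_surjective (I := J)) ys
  refine ⟨xs, ?_, ?_⟩
  · rw [List.length_map, hd] at hys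
    exact_mod_cast hys
  · rw [← Ideal.comap_map_quotientMk, Ideal.map_ofList, ← Ideal.comap_radical, hrad]
    exact eq_maximalIdeal (Ideal.comap_isMaximal_of_surjective _ Ideal.Quotient.mk_surjective)

namespace LocalCohomology

open scoped TensorProduct

omit [IsLocalRing R] in
lemma subsingleton_sup_span_singleton (x : R) (I : Ideal R) {i : ℕ} {M : Type u} [AddCommGroup M]
    [Module R M] [Subsingleton (LocalCohomology I i M)]
    [Subsingleton (LocalCohomology I (i + 1) M)] :
    Subsingleton (LocalCohomology (I ⊔ Ideal.span {x}) (i + 1) M) :=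
  let ⟨e⟩ := nonempty_tensor_equiv x I (i := i) (M := M)
  e.symm.subsingleton

omit [IsLocalRing R] in
lemma exists_tensor_equiv_sup_ofList (xs : List R) :
    ∃ (T : Type u) (_ : AddCommGroup T) (_ : Module R T), ∀ (I : Ideal R) (c : ℕ) (M : Type u)
      [AddCommGroup M] [Module R M], (∀ i, c < i → Subsingleton (LocalCohomology I i M)) →
      (∀ i, c + xs.length < i → Subsingleton (LocalCohomology (I ⊔ Ideal.ofList xs) i M)) ∧
        Nonempty (LocalCohomology (I ⊔ Ideal.ofList xs) (c + xs.length) M ≃ₗ[R]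
          T ⊗[R] LocalCohomology I c M) := by
  induction xs with
  | nil =>
    refine ⟨R, inferInstance, inferInstance, fun I c M _ _ h => ?_⟩
    rw [Ideal.ofList_nil, sup_bot_eq]
    exact ⟨h, ⟨(TensorProduct.lid R _).symm⟩⟩
  | cons x xs ih =>
    obtain ⟨T, _, _, hT⟩ := ih
    refine ⟨T ⊗[R] AwayQuotient x, inferInstance, inferInstance, fun I c M _ _ h => ?_⟩
    have := h (c + 1) c.lt_succ_self
    obtain ⟨e⟩ := nonempty_tensor_equiv x I (i := c) (M := M)
    obtain ⟨hvanish, ⟨e'⟩⟩ := hT (I ⊔ Ideal.span {x}) (c + 1) M fun i hi => by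
      obtain ⟨i, rfl⟩ := Nat.exists_eq_succ_of_ne_zero (Nat.ne_zero_of_lt hi)
      have := h i (Nat.lt_of_succ_lt_succ hi)
      have := h (i + 1) (Nat.lt_of_succ_lt hi)
      exact subsingleton_sup_span_singleton x I
    rw [Ideal.ofList_cons, ← sup_assoc, List.length_cons, Nat.add_comm xs.length, ← Nat.add_assoc]
    exact ⟨hvanish, ⟨e' ≪≫ₗ e.symm.lTensor T ≪≫ₗ (TensorProduct.assoc R T _ _).symm⟩⟩

lemma exists_tensor_equiv_maximalIdeal {J : Ideal R} {d : ℕ} (hd : ringKrullDim (R ⧸ J) = d) :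
    ∃ (T : Type u) (_ : AddCommGroup T) (_ : Module R T), ∀ (I K : Ideal R) (c : ℕ) (M : Type u)
      [AddCommGroup M] [Module R M], I ⊔ K = J → powTorsion K M = ⊤ →
      (∀ i, c < i → Subsingleton (LocalCohomology I i M)) →
      (∀ i, c + d < i → Subsingleton (LocalCohomology (maximalIdeal R) i M)) ∧
        Nonempty (LocalCohomology (maximalIdeal R) (c + d) M ≃ₗ[R]
          T ⊗[R] LocalCohomology I c M) := by
  obtain ⟨xs, rfl, hrad⟩ := exists_list_radical_sup_eq_maximalIdeal hd
  obtain ⟨T, _, _, hT⟩ := exists_tensor_equiv_sup_ofList xs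
  refine ⟨T, inferInstance, inferInstance, fun I K c M _ _ hIK hK h => ?_⟩
  obtain ⟨hvanish, ⟨e⟩⟩ := hT I c M h
  have hradical : (maximalIdeal R).radical = (I ⊔ Ideal.ofList xs ⊔ K).radical := by
    rw [sup_right_comm, hIK, hrad, (maximalIdeal.isMaximal R).isPrime.radical]
  have hequiv (i : ℕ) : Nonempty (LocalCohomology (maximalIdeal R) i M ≃ₗ[R]
      LocalCohomology (I ⊔ Ideal.ofList xs) i M) :=
    (nonempty_equiv_sup_of_powTorsion_eq_top _ i hK).map fun e' =>
      equivOfRadicalEq i M hradical ≪≫ₗ e'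
  refine ⟨fun i hi => ?_, (hequiv _).map fun e' => e' ≪≫ₗ e⟩
  have := hvanish i hi
  exact (hequiv i).some.subsingleton

lemma subsingleton_maximalIdeal_of_powTorsion_eq_top {J : Ideal R} {d : ℕ}
    (hd : ringKrullDim (R ⧸ J) = d) {M : Type u} [AddCommGroup M] [Module R M]
    (hM : powTorsion J M = ⊤) {i : ℕ} (hi : d < i) :
    Subsingleton (LocalCohomology (maximalIdeal R) i M) := by
  obtain ⟨T, _, _, hT⟩ := exists_tensor_equiv_maximalIdeal hd
  refine (hT ⊥ J 0 M (bot_sup_eq J) hM fun j hj => ?_).1 i (by rwa [Nat.zero_add])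
  obtain ⟨j, rfl⟩ := Nat.exists_eq_succ_of_ne_zero hj.ne'
  exact subsingleton_succ_of_powTorsion_eq_top j (powTorsion_bot M)

lemma subsingleton_maximalIdeal_of_supportDim_lt {M : Type u} [AddCommGroup M] [Module R M]
    [Module.Finite R M] {i : ℕ} (hi : Module.supportDim R M < i) :
    Subsingleton (LocalCohomology (maximalIdeal R) i M) := by
  rcases subsingleton_or_nontrivial M with h | h
  · exact subsingleton_of_subsingleton _ M i
  obtain ⟨e, he⟩ := WithBot.ne_bot_iff_exists.1 (Module.supportDim_ne_bot_of_nontrivial R M)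
  rw [← he] at hi
  obtain ⟨d, rfl⟩ := ENat.ne_top_iff_exists.1 (WithBot.coe_lt_coe.1 hi).ne_top
  refine subsingleton_maximalIdeal_of_powTorsion_eq_top (J := Module.annihilator R M) (d := d) ?_
    (powTorsion_eq_top_of_le_annihilator le_rfl) (by exact_mod_cast hi)
  rw [← Module.supportDim_eq_ringKrullDim_quotient_annihilator, ← he]
  rfl

end LocalCohomology

end Parameters

section Artinian

lemma exists_forall_eq_of_antitone_of_antitone {α : Type*} [PartialOrder α] [WellFoundedLT α]
    (F : ℕ → ℕ → α) (hleft : ∀ j, Antitone fun i => F i j) (hright : ∀ i, Antitone (F i)) :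
    ∃ k, ∀ i, k ≤ i → ∀ j, F i j = F k j := by
  obtain ⟨_, ⟨⟨a, b⟩, rfl⟩, hmin⟩ := wellFounded_lt.has_min (Set.range fun p : ℕ × ℕ => F p.1 p.2)
    (Set.range_nonempty _)
  have hcorner (i j : ℕ) (hi : a ≤ i) (hj : b ≤ j) : F i j = F a b :=
    eq_of_le_of_not_lt ((hleft j hi).trans (hright a hj)) (hmin _ ⟨(i, j), rfl⟩)
  choose c hc using fun j => WellFoundedLT.antitone_chain_condition (hleft j)
  let k := max a ((Finset.range b).sup c)
  have hak : a ≤ k := le_max_left _ _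
  refine ⟨k, fun i hi j => ?_⟩
  rcases le_or_gt b j with hj | hj
  · rw [hcorner i j (hak.trans hi) hj, hcorner k j hak hj]
  · have hck : c j ≤ k := (Finset.le_sup (Finset.mem_range.2 hj)).trans (le_max_right _ _)
    exact (hc j i (hck.trans hi)).symm.trans (hc j k hck)

variable {R : Type u} [CommRing R]

-- Melkersson's criterion: a decreasing chain `L i` is controlled by the submodules
-- `r ^ j • L i ∩ ker r` of the kernel, which decrease in both `i` and `j`.
theorem isArtinian_of_isArtinian_ker_smul {N : Type*} [AddCommGroup N] [Module R N] {r : R}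
    (hN : powTorsion (Ideal.span {r}) N = ⊤)
    [IsArtinian R (LinearMap.ker (r • (LinearMap.id : N →ₗ[R] N)))] : IsArtinian R N := by
  rw [← monotone_stabilizes_iff_artinian]
  intro chain
  let L (i : ℕ) : Submodule R N := (chain i).ofDual
  have hL : Antitone L := fun _ _ hij => chain.monotone hij
  let F (i j : ℕ) : Submodule R (LinearMap.ker (r • (LinearMap.id : N →ₗ[R] N))) :=
    ((L i).map (r ^ j • (LinearMap.id : N →ₗ[R] N))).comap (Submodule.subtype _)
  have hF_right (i : ℕ) : Antitone (F i) := by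
    rintro a b hab ⟨x, hx⟩ ⟨y, hy, rfl : r ^ b • y = x⟩
    refine ⟨r ^ (b - a) • y, (L i).smul_mem _ hy, ?_⟩
    change r ^ a • r ^ (b - a) • y = r ^ b • y
    rw [smul_smul, ← pow_add, Nat.add_sub_cancel' hab]
  obtain ⟨k, hk⟩ := exists_forall_eq_of_antitone_of_antitone F
    (fun j _ _ hab => Submodule.comap_mono (Submodule.map_mono (hL hab))) hF_right
  refine ⟨k, fun i hi => le_antisymm (fun x hx => ?_) (hL hi) (a := L k) (b := L i)⟩
  obtain ⟨t, ht⟩ := mem_powTorsion_span_singleton.1 (hN ▸ Submodule.mem_top : x ∈ powTorsion _ N)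
  induction t generalizing x with
  | zero => simp_all
  | succ t ih =>
    have hker : r ^ t • x ∈ LinearMap.ker (r • (LinearMap.id : N →ₗ[R] N)) := by
      change r • r ^ t • x = 0
      rw [smul_smul, ← pow_succ', ht]
    obtain ⟨y, hy, hxy : r ^ t • y = r ^ t • x⟩ : (⟨r ^ t • x, hker⟩ : LinearMap.ker _) ∈ F i t :=
      hk i hi t ▸ ⟨x, hx, rfl⟩
    have hsub : x - y ∈ L i := ih (x - y) (sub_mem hx (hL hi hy)) (by rw [smul_sub, hxy, sub_self])
    simpa using add_mem hsub hy

lemma powTorsion_quotient_powTorsion [IsNoetherianRing R] (I : Ideal R) (M : Type*)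
    [AddCommGroup M] [Module R M] : powTorsion I (M ⧸ powTorsion I M) = ⊥ := by
  refine (Submodule.eq_bot_iff _).2 <| (Submodule.mkQ_surjective _).forall.2 fun m ⟨t, ht⟩ => ?_
  let L : Submodule R M := I ^ t • Submodule.span R {m}
  have hL : L ≤ powTorsion I M := Submodule.smul_le.2 fun a ha x hx => by
    obtain ⟨b, rfl⟩ := Submodule.mem_span_singleton.1 hx
    rw [smul_comm]
    exact Submodule.smul_mem _ b ((Submodule.Quotient.mk_eq_zero _).1 (ht a ha))
  have : Module.Finite R L :=
    Module.Finite.iff_fg.2 (Submodule.FG.smul (IsNoetherian.noetherian _)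
      (Submodule.fg_span_singleton m))
  obtain ⟨s, hs⟩ := exists_pow_le_annihilator (powTorsion_eq_top_of_injective
    (Submodule.inclusion_injective hL) (powTorsion_powTorsion I M))
  have hle : I ^ (s + t) ≤ (Submodule.span R {m}).annihilator := by
    rw [pow_add, ← smul_eq_mul, Submodule.le_annihilator_iff, Submodule.smul_assoc]
    exact Submodule.le_annihilator_iff.1 hs
  exact (Submodule.Quotient.mk_eq_zero _).2 ⟨s + t, fun a ha =>
    (Submodule.mem_annihilator_span_singleton _ _).1 (hle ha)⟩

open IsLocalRing

section LocalRing

variable [IsLocalRing R] {N : Type*} [AddCommGroup N] [Module R N] [Module.Finite R N]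

lemma maximalIdeal_mem_minimalPrimes_annihilator [Nontrivial N]
    (hN : powTorsion (maximalIdeal R) N = ⊤) :
    maximalIdeal R ∈ (Module.annihilator R N).minimalPrimes := by
  obtain ⟨t, ht⟩ := exists_pow_le_annihilator hN
  refine ⟨⟨inferInstance, le_maximalIdeal fun h => ?_⟩, fun q hq _ =>
    hq.1.le_of_pow_le (ht.trans hq.2)⟩
  exact not_subsingleton N (Module.annihilator_eq_top_iff.1 h)

variable [IsNoetherianRing R]

lemma isArtinian_of_powTorsion_maximalIdeal_eq_top (hN : powTorsion (maximalIdeal R) N = ⊤) :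
    IsArtinian R N := by
  rcases subsingleton_or_nontrivial N with h | h
  · infer_instance
  have := quotient_artinian_of_mem_minimalPrimes_of_isLocalRing _
    (maximalIdeal_mem_minimalPrimes_annihilator hN)
  let _ : Module (R ⧸ Module.annihilator R N) N := Module.quotientAnnihilator
  have : IsScalarTower R (R ⧸ Module.annihilator R N) N :=
    (Module.isTorsionBySet_annihilator R N).isScalarTower
  have : Module.Finite (R ⧸ Module.annihilator R N) N :=
    Module.Finite.of_restrictScalars_finite R _ _
  exact isArtinian_of_surjective_algebraMap (R := R ⧸ Module.annihilator R N)
    Ideal.Quotient.mk_surjective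

lemma exists_isSMulRegular_forall_notMem (hN : powTorsion (maximalIdeal R) N = ⊥)
    {S : Set (Ideal R)} (hS : S.Finite) (hprime : ∀ p ∈ S, p.IsPrime) (hm : maximalIdeal R ∉ S) :
    ∃ r ∈ maximalIdeal R, IsSMulRegular N r ∧ ∀ p ∈ S, r ∉ p := by
  by_contra! hcon
  have hcover : (maximalIdeal R : Set R) ⊆ ⋃ p ∈ associatedPrimes R N ∪ S, (p : Set R) := by
    intro r hr
    rw [Set.biUnion_union, biUnion_associatedPrimes_eq_compl_regular R N]
    by_cases hreg : IsSMulRegular N r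
    · obtain ⟨p, hp, hrp⟩ := hcon r hr hreg
      exact Or.inr (Set.mem_biUnion hp hrp)
    · exact Or.inl hreg
  have hprime' : ∀ p ∈ associatedPrimes R N ∪ S, p.IsPrime :=
    fun p hp => hp.elim (fun h => h.isPrime) (hprime p)
  obtain ⟨p, hp, hle⟩ := (Ideal.subset_union_prime_finite
    ((associatedPrimes.finite R N).union hS) (f := fun p => p) ⊥ ⊥
    fun p hp _ _ => hprime' p hp).1 hcover
  obtain rfl : p = maximalIdeal R := le_antisymm (le_maximalIdeal (hprime' p hp).ne_top) hle
  rcases hp with hp | hp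
  · obtain ⟨hp_prime, x, hx⟩ := isAssociatedPrime_iff.1 hp
    have hx_mem : x ∈ powTorsion (maximalIdeal R) N := ⟨1, fun a ha => by
      rw [pow_one, hx, Submodule.mem_colon_singleton] at ha
      exact (Submodule.mem_bot R).1 ha⟩
    rw [hN, Submodule.mem_bot] at hx_mem
    exact hp_prime.ne_top (hx.trans (by simp [hx_mem]))
  · exact hm hp

lemma exists_mem_maximalIdeal_isSMulRegular (hN : powTorsion (maximalIdeal R) N = ⊥) :
    ∃ r ∈ maximalIdeal R, IsSMulRegular N r := by
  obtain ⟨r, hr, hreg, -⟩ := exists_isSMulRegular_forall_notMem hN Set.finite_empty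
    (fun _ h => h.elim) (Set.notMem_empty _)
  exact ⟨r, hr, hreg⟩

end LocalRing

open scoped Pointwise in
lemma exact_smul_mkQ (r : R) (M : Type*) [AddCommGroup M] [Module R M] :
    Function.Exact (r • (LinearMap.id : M →ₗ[R] M)) (r • (⊤ : Submodule R M)).mkQ :=
  LinearMap.exact_iff.2 ((Submodule.ker_mkQ _).trans (LinearMap.range_eq_map _).symm)

lemma injective_smul_id {r : R} {M : Type*} [AddCommGroup M] [Module R M]
    (hr : IsSMulRegular M r) : Function.Injective (r • (LinearMap.id : M →ₗ[R] M)) :=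
  hr

namespace LocalCohomology

variable (I : Ideal R) (i : ℕ) {M : Type u} [AddCommGroup M] [Module R M]

section Regular

open scoped Pointwise

variable {r : R} (hr : IsSMulRegular M r)

/-- The connecting homomorphism of `0 → M → M → M / rM → 0`. -/
noncomputable def deltaSMul : LocalCohomology I i (QuotSMulTop r M) →ₗ[R]
    LocalCohomology I (i + 1) M :=
  delta I i (injective_smul_id hr) (Submodule.mkQ_surjective _) (exact_smul_mkQ r M)

include hr in
lemma ker_map_mkQ : LinearMap.ker (map I i (r • (⊤ : Submodule R M)).mkQ) =
    r • (⊤ : Submodule R (LocalCohomology I i M)) := by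
  rw [(exact_mid I i (injective_smul_id hr) (Submodule.mkQ_surjective _)
    (exact_smul_mkQ r M)).linearMap_ker_eq, map_smul_id]
  exact LinearMap.range_eq_map _

include hr in
lemma map_mkQ_surjective [Subsingleton (LocalCohomology I (i + 1) M)] :
    Function.Surjective (map I i (r • (⊤ : Submodule R M)).mkQ) := fun z =>
  (exact_right I i (injective_smul_id hr) (Submodule.mkQ_surjective _) (exact_smul_mkQ r M) z).1
    (Subsingleton.elim _ _)

lemma exact_deltaSMul_smul : Function.Exact (deltaSMul I i hr)
    (r • (LinearMap.id : LocalCohomology I (i + 1) M →ₗ[R] _)) := by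
  rw [← map_smul_id]
  exact exact_left I i (injective_smul_id hr) (Submodule.mkQ_surjective _) (exact_smul_mkQ r M)

include hr in
variable {I i} in
lemma isArtinian_succ_of_quotSMulTop (hrI : r ∈ I)
    [IsArtinian R (LocalCohomology I i (QuotSMulTop r M))] :
    IsArtinian R (LocalCohomology I (i + 1) M) := by
  have : IsArtinian R (LinearMap.ker
      (r • (LinearMap.id : LocalCohomology I (i + 1) M →ₗ[R] _))) := by
    rw [(exact_deltaSMul_smul I i hr).linearMap_ker_eq]
    exact isArtinian_range _
  refine isArtinian_of_isArtinian_ker_smul (r := r) (top_unique ?_)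
  rw [← powTorsion_self_eq_top I]
  exact powTorsion_anti ((Ideal.span_singleton_le_iff_mem _).2 hrI) _

end Regular

variable [IsNoetherianRing R]

variable (M) in
/-- Dividing out `Γ_I(M)` does not change higher local cohomology. -/
noncomputable def quotientPowTorsionEquiv :
    LocalCohomology I (i + 1) M ≃ₗ[R] LocalCohomology I (i + 1) (M ⧸ powTorsion I M) :=
  have hΓ (j : ℕ) : Subsingleton (LocalCohomology I (j + 1) (powTorsion I M)) :=
    subsingleton_succ_of_powTorsion_eq_top j (powTorsion_powTorsion I M)
  have hinj := (powTorsion I M).injective_subtype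
  have hsurj := (powTorsion I M).mkQ_surjective
  have hexact := LinearMap.exact_subtype_mkQ (powTorsion I M)
  LinearEquiv.ofBijective (map I (i + 1) (powTorsion I M).mkQ) ⟨by
    rw [injective_iff_map_eq_zero]
    intro z hz
    obtain ⟨w, rfl⟩ := (exact_mid I (i + 1) hinj hsurj hexact z).1 hz
    rw [Subsingleton.elim w 0, map_zero], fun z =>
    (exact_right I (i + 1) hinj hsurj hexact z).1 (Subsingleton.elim _ _)⟩

theorem isArtinian_maximalIdeal [IsLocalRing R] (i : ℕ) (M : Type u) [AddCommGroup M] [Module R M]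
    [Module.Finite R M] : IsArtinian R (LocalCohomology (maximalIdeal R) i M) := by
  induction i generalizing M with
  | zero =>
    rw [(zeroEquiv (maximalIdeal R) M).isArtinian_iff]
    exact isArtinian_of_powTorsion_maximalIdeal_eq_top (powTorsion_powTorsion _ M)
  | succ i ih =>
    rw [(quotientPowTorsionEquiv (maximalIdeal R) i M).isArtinian_iff]
    obtain ⟨r, hr, hreg⟩ := exists_mem_maximalIdeal_isSMulRegular
      (powTorsion_quotient_powTorsion (maximalIdeal R) M)
    have := ih (QuotSMulTop r (M ⧸ powTorsion (maximalIdeal R) M))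
    exact isArtinian_succ_of_quotSMulTop hreg hr

end LocalCohomology

end Artinian

section Support

variable {R : Type u} [CommRing R] {N : Type*} [AddCommGroup N] [Module R N] {J : Ideal R}

lemma support_subset_zeroLocus_of_powTorsion_eq_top (hN : powTorsion J N = ⊤) :
    Module.support R N ⊆ PrimeSpectrum.zeroLocus (J : Set R) := by
  intro p hp y hy
  obtain ⟨m, hm⟩ := Module.mem_support_iff'.1 hp
  obtain ⟨k, hk⟩ := mem_powTorsion.1 (hN ▸ Submodule.mem_top : m ∈ powTorsion J N)
  by_contra hyp
  exact hm (y ^ k) (fun hmem => hyp (p.2.mem_of_pow_mem k hmem)) (hk _ (Ideal.pow_mem_pow hy k))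

lemma supportDim_le_of_powTorsion_eq_top (hN : powTorsion J N = ⊤) :
    Module.supportDim R N ≤ ringKrullDim (R ⧸ J) := by
  rw [ringKrullDim_quotient]
  exact Order.krullDim_le_of_strictMono
    (Set.inclusion (support_subset_zeroLocus_of_powTorsion_eq_top hN)) fun _ _ hab => hab

lemma supportDim_quotient_smul_top [Module.Finite R N] (I : Ideal R) :
    Module.supportDim R (N ⧸ (I • (⊤ : Submodule R N))) =
      ringKrullDim (R ⧸ (I ⊔ Module.annihilator R N)) := by
  rw [Module.supportDim, Module.support_quotient, Module.support_eq_zeroLocus,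
    ringKrullDim_quotient, PrimeSpectrum.zeroLocus_sup, Set.inter_comm]

open IsLocalRing

variable [IsLocalRing R]

lemma supportDim_le_zero_of_powTorsion_maximalIdeal_eq_top
    (hN : powTorsion (maximalIdeal R) N = ⊤) : Module.supportDim R N ≤ 0 :=
  (supportDim_le_of_powTorsion_eq_top hN).trans_eq (ringKrullDim_eq_zero_of_field (ResidueField R))

lemma supportDim_le_zero_of_maximalIdeal_mem_minimalPrimes [Module.Finite R N]
    (hN : maximalIdeal R ∈ (Module.annihilator R N).minimalPrimes) :
    Module.supportDim R N ≤ 0 := by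
  refine Order.krullDim_nonpos_iff_forall_isMax.2 ?_
  rintro ⟨p, hp⟩ ⟨q, hq⟩ _
  change q.asIdeal ≤ p.asIdeal
  exact (le_maximalIdeal q.2.ne_top).trans
    (hN.2 ⟨p.2, Module.mem_support_iff_of_finite.1 hp⟩ (le_maximalIdeal p.2.ne_top))

lemma supportDim_quotient_powTorsion_maximalIdeal (hN : 0 < Module.supportDim R N) :
    Module.supportDim R (N ⧸ powTorsion (maximalIdeal R) N) = Module.supportDim R N := by
  let Γ := powTorsion (maximalIdeal R) N
  have : Nontrivial (N ⧸ Γ) := Submodule.Quotient.nontrivial_iff.2 fun htop =>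
    (supportDim_le_zero_of_powTorsion_maximalIdeal_eq_top htop).not_gt hN
  have hΓ : Module.support R Γ ⊆ Module.support R (N ⧸ Γ) := by
    refine (support_subset_zeroLocus_of_powTorsion_eq_top (powTorsion_powTorsion _ N)).trans ?_
    rw [PrimeSpectrum.zeroLocus_eq_singleton, Set.singleton_subset_iff]
    exact closedPoint_mem_support R _
  rw [Module.supportDim, Module.supportDim, Module.support_of_exact
    (LinearMap.exact_subtype_mkQ Γ) Γ.injective_subtype Γ.mkQ_surjective,
    Set.union_eq_self_of_subset_left hΓ]

end Support

section NonVanishing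

open scoped Pointwise

open IsLocalRing

variable {R : Type u} [CommRing R]

lemma exists_mem_forall_smul_top_le_smul_top {A : Type*} [AddCommGroup A] [Module R A]
    [IsArtinian R A] {S : Set R} (hS : S.Nonempty) (hmul : ∀ s ∈ S, ∀ r ∈ S, s * r ∈ S) :
    ∃ s ∈ S, ∀ r ∈ S, s • (⊤ : Submodule R A) ≤ r • (⊤ : Submodule R A) := by
  obtain ⟨_, ⟨s, hs, rfl⟩, hmin⟩ := IsArtinian.set_has_minimal
    ((fun s : R => s • (⊤ : Submodule R A)) '' S) (hS.image _)
  refine ⟨s, hs, fun r hr => ?_⟩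
  have hle (a b : R) : (a * b) • (⊤ : Submodule R A) ≤ a • (⊤ : Submodule R A) := by
    rw [mul_smul]
    exact smul_mono_right a le_top
  calc s • (⊤ : Submodule R A)
      = (s * r) • (⊤ : Submodule R A) :=
        (eq_of_le_of_not_lt (hle s r) (hmin _ ⟨_, hmul s hs r hr, rfl⟩)).symm
    _ ≤ r • (⊤ : Submodule R A) := mul_comm s r ▸ hle r s

namespace LocalCohomology

section

variable {I : Ideal R} {i : ℕ} {M N P : Type u} [AddCommGroup M] [Module R M] [AddCommGroup N]
  [Module R N] [AddCommGroup P] [Module R P]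

lemma map_surjective_of_exact {f : M →ₗ[R] N} {g : N →ₗ[R] P} (hfg : Function.Exact f g)
    (hg : Function.Surjective g) [Subsingleton (LocalCohomology I (i + 1) (LinearMap.ker f))]
    [Subsingleton (LocalCohomology I i P)] : Function.Surjective (map I i f) := by
  have hker : Function.Exact (LinearMap.ker f).subtype f.rangeRestrict := by
    rw [LinearMap.exact_iff, LinearMap.ker_rangeRestrict, Submodule.range_subtype]
  have hrange : Function.Exact (LinearMap.range f).subtype g := by
    rw [LinearMap.exact_iff, hfg.linearMap_ker_eq, Submodule.range_subtype]
  have hcomp : map I i f = map I i (LinearMap.range f).subtype ∘ₗ map I i f.rangeRestrict :=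
    (congrArg (map I i) (LinearMap.subtype_comp_codRestrict _ _ _).symm).trans (map_comp I i _ _)
  rw [hcomp, LinearMap.coe_comp]
  have hsurj : Function.Surjective (map I i f.rangeRestrict) := fun z =>
    (exact_right I i (Submodule.injective_subtype _) f.surjective_rangeRestrict hker z).1
      (Subsingleton.elim _ _)
  exact Function.Surjective.comp (fun z => (exact_mid I i (Submodule.injective_subtype _) hg
    hrange z).1 (Subsingleton.elim _ _)) hsurj

lemma subsingleton_quotSMulTop {r : R} (hr : IsSMulRegular M r)
    [Subsingleton (LocalCohomology I (i + 1) M)]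
    (htop : r • (⊤ : Submodule R (LocalCohomology I i M)) = ⊤) :
    Subsingleton (LocalCohomology I i (QuotSMulTop r M)) := by
  refine subsingleton_of_forall_eq 0 <| (map_mkQ_surjective I i hr).forall.2 fun z => ?_
  rw [← LinearMap.mem_ker, ker_map_mkQ I i hr, htop]
  exact Submodule.mem_top

lemma smul_top_eq_top_of_quotSMulTop {r s : R} (hs : IsSMulRegular M s)
    [Subsingleton (LocalCohomology I (i + 1) M)]
    (hsr : s • (⊤ : Submodule R (LocalCohomology I i M)) ≤ r • ⊤)
    (htop : r • (⊤ : Submodule R (LocalCohomology I i (QuotSMulTop s M))) = ⊤) :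
    r • (⊤ : Submodule R (LocalCohomology I i M)) = ⊤ := by
  refine Submodule.eq_top_iff'.2 fun z => ?_
  obtain ⟨y, -, hy⟩ := (Submodule.mem_smul_pointwise_iff_exists _ r _).1
    (htop ▸ Submodule.mem_top : map _ _ (s • (⊤ : Submodule R M)).mkQ z ∈ r • ⊤)
  obtain ⟨w, rfl⟩ := map_mkQ_surjective I i hs y
  have hsub : z - r • w ∈ s • (⊤ : Submodule R (LocalCohomology I i M)) := by
    rw [← ker_map_mkQ _ _ hs, LinearMap.mem_ker, map_sub, map_smul, hy, sub_self]
  rw [← sub_add_cancel z (r • w)]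
  exact add_mem (hsr hsub) (Submodule.smul_mem_pointwise_smul w r ⊤ trivial)

end

variable [IsNoetherianRing R] [IsLocalRing R] {M : Type u} [AddCommGroup M] [Module R M]
  [Module.Finite R M]

lemma smul_top_eq_top_of_supportDim_lt {r : R} {i : ℕ} (hM : Module.supportDim R M ≤ i)
    (hr : Module.supportDim R (QuotSMulTop r M) < i) :
    r • (⊤ : Submodule R (LocalCohomology (maximalIdeal R) i M)) = ⊤ := by
  have : Subsingleton (LocalCohomology (maximalIdeal R) i (QuotSMulTop r M)) :=
    subsingleton_maximalIdeal_of_supportDim_lt hr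
  have : Subsingleton (LocalCohomology (maximalIdeal R) (i + 1)
      (LinearMap.ker (r • (LinearMap.id : M →ₗ[R] M)))) := by
    refine subsingleton_maximalIdeal_of_supportDim_lt (lt_of_le_of_lt
      (Module.supportDim_le_of_injective _ (Submodule.injective_subtype _)) ?_)
    rw [Nat.cast_succ]
    exact ENat.WithBot.lt_add_one_iff.2 hM
  have h := map_surjective_of_exact (I := maximalIdeal R) (i := i) (exact_smul_mkQ r M)
    (Submodule.mkQ_surjective _)
  rw [map_smul_id, ← LinearMap.range_eq_top] at h
  exact (LinearMap.range_eq_map _).symm.trans h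

lemma exists_isSMulRegular_smul_top_eq_top {n : ℕ} (htor : powTorsion (maximalIdeal R) M = ⊥)
    (hM : Module.supportDim R M = n + 1)
    [Subsingleton (LocalCohomology (maximalIdeal R) (n + 1) M)] :
    ∃ r ∈ maximalIdeal R, IsSMulRegular M r ∧
      r • (⊤ : Submodule R (LocalCohomology (maximalIdeal R) n M)) = ⊤ := by
  rcases n.eq_zero_or_pos with rfl | hn
  · obtain ⟨r, hr, hreg⟩ := exists_mem_maximalIdeal_isSMulRegular htor
    have : Subsingleton (powTorsion (maximalIdeal R) M) := Submodule.subsingleton_iff_eq_bot.2 htor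
    have := (zeroEquiv (maximalIdeal R) M).subsingleton
    exact ⟨r, hr, hreg, Subsingleton.elim _ _⟩
  have := isArtinian_maximalIdeal (R := R) n M
  obtain ⟨s, ⟨hs, hsreg⟩, hsmin⟩ := exists_mem_forall_smul_top_le_smul_top
    (A := LocalCohomology (maximalIdeal R) n M)
    (S := {s | s ∈ maximalIdeal R ∧ IsSMulRegular M s})
    (exists_mem_maximalIdeal_isSMulRegular htor)
    fun a ha b hb => ⟨Ideal.mul_mem_left _ a hb.1, ha.2.mul hb.2⟩
  have hdim : Module.supportDim R (QuotSMulTop s M) = n := ENat.WithBot.add_one_cancel.1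
    ((Module.supportDim_quotSMulTop_succ_eq_supportDim hsreg hs).trans hM)
  obtain ⟨r, hr, hreg, hrmin⟩ := exists_isSMulRegular_forall_notMem htor
    (Ideal.finite_minimalPrimes_of_isNoetherianRing R (Module.annihilator R (QuotSMulTop s M)))
    (fun p hp => hp.1.1) fun hmem => by
      have hle := supportDim_le_zero_of_maximalIdeal_mem_minimalPrimes hmem
      rw [hdim] at hle
      exact hn.not_ge (by exact_mod_cast hle)
  have hdim_lt : Module.supportDim R (QuotSMulTop r (QuotSMulTop s M)) < n :=
    ENat.WithBot.add_one_le_natCast_iff.1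
      ((Module.supportDim_quotSMulTop_succ_le_of_notMem_minimalPrimes hrmin).trans_eq hdim)
  exact ⟨r, hr, hreg, smul_top_eq_top_of_quotSMulTop hsreg (hsmin r ⟨hr, hreg⟩)
    (smul_top_eq_top_of_supportDim_lt hdim.le hdim_lt)⟩

lemma nontrivial_maximalIdeal_zero_of_supportDim_eq_zero (hM : Module.supportDim R M = 0) :
    Nontrivial (LocalCohomology (maximalIdeal R) 0 M) := by
  have : Nontrivial M := by
    rw [← Module.supportDim_ne_bot_iff_nontrivial R, hM]
    exact WithBot.coe_ne_bot
  have hbot : powTorsion (maximalIdeal R) M ≠ ⊥ := by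
    intro hbot
    obtain ⟨r, hr, hreg⟩ := exists_mem_maximalIdeal_isSMulRegular hbot
    have hdim := (Module.supportDim_quotSMulTop_succ_eq_supportDim hreg hr).trans hM
    rw [(ENat.WithBot.add_one_le_zero_iff _).1 hdim.le, WithBot.bot_add] at hdim
    exact WithBot.bot_ne_coe hdim
  have := Submodule.nontrivial_iff_ne_bot.2 hbot
  exact (zeroEquiv (maximalIdeal R) M).nontrivial

theorem nontrivial_maximalIdeal_of_supportDim_eq {n : ℕ} (hM : Module.supportDim R M = n) :
    Nontrivial (LocalCohomology (maximalIdeal R) n M) := by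
  induction n generalizing M with
  | zero => exact nontrivial_maximalIdeal_zero_of_supportDim_eq_zero hM
  | succ n ih =>
    let N := M ⧸ powTorsion (maximalIdeal R) M
    have htor : powTorsion (maximalIdeal R) N = ⊥ := powTorsion_quotient_powTorsion _ M
    have hN : Module.supportDim R N = n + 1 := by
      rw [supportDim_quotient_powTorsion_maximalIdeal (hM ▸ by exact_mod_cast n.succ_pos), hM,
        Nat.cast_succ]
    by_contra hnontrivial
    have := not_nontrivial_iff_subsingleton.1 hnontrivial
    have := (quotientPowTorsionEquiv (maximalIdeal R) n M).symm.subsingleton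
    obtain ⟨r, hr, hreg, htop⟩ := exists_isSMulRegular_smul_top_eq_top htor hN
    have hdim : Module.supportDim R (QuotSMulTop r N) = n := ENat.WithBot.add_one_cancel.1
      ((Module.supportDim_quotSMulTop_succ_eq_supportDim hreg hr).trans hN)
    have := ih hdim
    exact not_subsingleton (LocalCohomology (maximalIdeal R) n (QuotSMulTop r N))
      (subsingleton_quotSMulTop hreg htop)

end LocalCohomology

end NonVanishing

section Main

namespace LocalCohomology

open IsLocalRing

open scoped TensorProduct

variable {R : Type u} [CommRing R] [IsNoetherianRing R]

lemma powTorsion_sup_annihilator_eq_top (I : Ideal R) (i : ℕ) (M : Type u) [AddCommGroup M]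
    [Module R M] : powTorsion (I ⊔ Module.annihilator R M) (LocalCohomology I i M) = ⊤ := by
  rw [powTorsion_sup, powTorsion_self_eq_top,
    powTorsion_eq_top I i (powTorsion_eq_top_of_le_annihilator le_rfl), inf_top_eq]

variable [IsLocalRing R]

lemma exists_tensor_equiv_of_powTorsion_eq_top {J : Ideal R} {d : ℕ}
    (hd : ringKrullDim (R ⧸ J) = d) :
    ∃ (T : Type u) (_ : AddCommGroup T) (_ : Module R T),
      (∀ (N : Type u) [AddCommGroup N] [Module R N], powTorsion J N = ⊤ →
        Nonempty (LocalCohomology (maximalIdeal R) d N ≃ₗ[R] T ⊗[R] N)) ∧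
      ∀ (I : Ideal R) (c : ℕ) (M : Type u) [AddCommGroup M] [Module R M],
        I ⊔ Module.annihilator R M = J → (∀ i, c < i → Subsingleton (LocalCohomology I i M)) →
        Nonempty (LocalCohomology (maximalIdeal R) (c + d) M ≃ₗ[R]
          T ⊗[R] LocalCohomology I c M) := by
  obtain ⟨T, _, _, hT⟩ := exists_tensor_equiv_maximalIdeal hd
  refine ⟨T, inferInstance, inferInstance, fun N _ _ hN => ?_, fun I c M _ _ hI hvanish =>
    (hT I _ c M hI (powTorsion_eq_top_of_le_annihilator le_rfl) hvanish).2⟩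
  obtain ⟨-, ⟨e⟩⟩ := hT ⊥ J 0 N (bot_sup_eq J) hN fun i hi => by
    obtain ⟨i, rfl⟩ := Nat.exists_eq_succ_of_ne_zero hi.ne'
    exact subsingleton_succ_of_powTorsion_eq_top i (powTorsion_bot N)
  have hzero : LocalCohomology (⊥ : Ideal R) 0 N ≃ₗ[R] N :=
    zeroEquiv ⊥ N ≪≫ₗ LinearEquiv.ofTop _ (powTorsion_bot N)
  rw [Nat.zero_add] at e
  exact ⟨e ≪≫ₗ hzero.lTensor T⟩

lemma nonempty_maximalIdeal_equiv {I : Ideal R} {c d : ℕ} {M : Type u} [AddCommGroup M]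
    [Module R M] (hd : ringKrullDim (R ⧸ (I ⊔ Module.annihilator R M)) = d)
    (hvanish : ∀ i, c < i → Subsingleton (LocalCohomology I i M)) :
    Nonempty (LocalCohomology (maximalIdeal R) d (LocalCohomology I c M) ≃ₗ[R]
      LocalCohomology (maximalIdeal R) (c + d) M) := by
  obtain ⟨T, _, _, hT, hT'⟩ := exists_tensor_equiv_of_powTorsion_eq_top hd
  obtain ⟨e⟩ := hT _ (powTorsion_sup_annihilator_eq_top I c M)
  exact (hT' I c M rfl hvanish).map fun e' => e ≪≫ₗ e'.symm

/- `N` need not be finitely generated: `T ⊗ N` is a union of images of `T ⊗ C` with `C` cyclic,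
to which the vanishing for finitely generated modules applies. -/
lemma subsingleton_maximalIdeal_of_powTorsion_eq_top_of_supportDim_lt {J : Ideal R} {d : ℕ}
    (hd : ringKrullDim (R ⧸ J) = d) {N : Type u} [AddCommGroup N] [Module R N]
    (hN : powTorsion J N = ⊤) (hlt : Module.supportDim R N < d) :
    Subsingleton (LocalCohomology (maximalIdeal R) d N) := by
  obtain ⟨T, _, _, hT, -⟩ := exists_tensor_equiv_of_powTorsion_eq_top hd
  obtain ⟨e⟩ := hT N hN
  have htmul (t : T) (y : N) : t ⊗ₜ[R] y = 0 := by
    let C := Submodule.span R {y}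
    obtain ⟨eC⟩ := hT C (powTorsion_eq_top_of_injective C.injective_subtype hN)
    have : Subsingleton (LocalCohomology (maximalIdeal R) d C) :=
      subsingleton_maximalIdeal_of_supportDim_lt
        ((Module.supportDim_le_of_injective _ C.injective_subtype).trans_lt hlt)
    have := eC.symm.subsingleton
    have hC : t ⊗ₜ[R] (⟨y, Submodule.mem_span_singleton_self y⟩ : C) = 0 := Subsingleton.elim _ _
    exact (congrArg (C.subtype.lTensor T) hC).trans (map_zero _)
  have : Subsingleton (T ⊗[R] N) := subsingleton_of_forall_eq 0 fun z => by
    induction z with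
    | zero => rfl
    | tmul t y => exact htmul t y
    | add z w hz hw => rw [hz, hw, add_zero]
  exact e.subsingleton

lemma supportDim_eq_of_supportDim_eq_add {I : Ideal R} {c d : ℕ} {M : Type u} [AddCommGroup M]
    [Module R M] [Module.Finite R M] (hM : Module.supportDim R M = (c + d : ℕ))
    (hd : ringKrullDim (R ⧸ (I ⊔ Module.annihilator R M)) = d)
    (hvanish : ∀ i, c < i → Subsingleton (LocalCohomology I i M)) :
    Module.supportDim R (LocalCohomology I c M) = d := by
  have htors := powTorsion_sup_annihilator_eq_top I c M
  refine ((supportDim_le_of_powTorsion_eq_top htors).trans_eq hd).antisymm ?_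
  by_contra! hlt
  have := subsingleton_maximalIdeal_of_powTorsion_eq_top_of_supportDim_lt hd htors hlt
  obtain ⟨e⟩ := nonempty_maximalIdeal_equiv hd hvanish
  have := nontrivial_maximalIdeal_of_supportDim_eq hM
  exact not_subsingleton (LocalCohomology (maximalIdeal R) (c + d) M) e.symm.subsingleton

end LocalCohomology

lemma subsingleton_localCohomology_of_cohomologicalDimension_lt {R : Type u} [CommRing R]
    {I : Ideal R} {M : ModuleCat.{u} R} {i : ℕ} (hi : cohomologicalDimension I M < i) :
    Subsingleton ((localCohomology I i).obj M) :=
  not_nontrivial_iff_subsingleton.1 fun hnontrivial =>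
    hi.not_ge (le_sSup ⟨i, rfl, hnontrivial⟩)

end Main

/-- over a Noetherian local ring, for a finitely generated module `M` of
Krull dimension `n` and an ideal `I` with `dim (M/IM) = d`, if `cd(I,M) = n - d` then
`H^d_m(H^{n-d}_I(M)) ≅ H^n_m(M)` and `dim Supp H^{n-d}_I(M) = d`. -/
theorem localCohomology_iso_and_dim_support_of_cohomologicalDimension_eq_sub
    (R : Type u) [CommRing R] [IsNoetherianRing R] [IsLocalRing R]
    (M : ModuleCat.{u} R) [Module.Finite R M] (I : Ideal R) (n d : ℕ)
    (hn : Order.krullDim (Module.support R M) = (n : WithBot ℕ∞))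
    (hd : Order.krullDim
      (Module.support R (M ⧸ (I • (⊤ : Submodule R M)))) = (d : WithBot ℕ∞))
    (hcd : cohomologicalDimension I M = ((n - d : ℕ) : ℕ∞)) :
    Nonempty ((localCohomology (IsLocalRing.maximalIdeal R) d).obj
        ((localCohomology I (n - d)).obj M) ≅
      (localCohomology (IsLocalRing.maximalIdeal R) n).obj M) ∧
    Order.krullDim (Module.support R ((localCohomology I (n - d)).obj M))
      = (d : WithBot ℕ∞) := by
  have hdn : (d : WithBot ℕ∞) ≤ n :=
    hd.symm.trans_le <|
      (Module.supportDim_le_of_surjective _ (Submodule.mkQ_surjective _)).trans_eq hn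
  obtain ⟨c, rfl⟩ := Nat.exists_eq_add_of_le' (show d ≤ n by exact_mod_cast hdn)
  rw [Nat.add_sub_cancel] at hcd ⊢
  have hvanish (i : ℕ) (hi : c < i) : Subsingleton (LocalCohomology I i M) :=
    subsingleton_localCohomology_of_cohomologicalDimension_lt (hcd.trans_lt (Nat.cast_lt.2 hi))
  have hdim := (supportDim_quotient_smul_top I).symm.trans hd
  obtain ⟨e⟩ := LocalCohomology.nonempty_maximalIdeal_equiv hdim hvanish
  exact ⟨⟨LinearEquiv.toModuleIso (X₁ := (localCohomology (IsLocalRing.maximalIdeal R) d).obj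
      ((localCohomology I c).obj M))
      (X₂ := (localCohomology (IsLocalRing.maximalIdeal R) (c + d)).obj M) e⟩,
    LocalCohomology.supportDim_eq_of_supportDim_eq_add hn hdim hvanish⟩
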